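/- arXiv:2010.08994 — 7 statements merged into one kernel-verified Lean document; each statement's English description precedes it below -/
import Mathlib

section
/- There is an absolute constant C > 0 such that the following holds. Let S ⊂ ℝ be a finite set with |S| = s and let f : {0,1}^n → S be a function with sparsity spar(f) = r ≥ 2. Then for every z ∈ {0,1}^n, the family W(f,z) = {w ⊆ [n]∖z : f(z ∨ w) ≠ f(z)} has a hitting set of size at most C·s⁴·(log₂ r)^5; that is, HSC(f) = O(s⁴·(log r)^5). -/
/-- The coefficient of the monomial `s` in the unique multilinear polynomial computing
`f : {0,1}^n → ℝ` (subsets of `Fin n` identified with points of the cube),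
given by Möbius inversion. -/
noncomputable def coeff {n : ℕ} (f : Finset (Fin n) → ℝ) (s : Finset (Fin n)) : ℝ :=
  ∑ t ∈ s.powerset, (-1 : ℝ) ^ (s.card - t.card) * f t

/-- The sparsity of `f`: the number of nonzero coefficients. -/
noncomputable def sparsity {n : ℕ} (f : Finset (Fin n) → ℝ) : ℕ :=
  {s : Finset (Fin n) | coeff f s ≠ 0}.ncard

/-- The set system of non-constant monomials of `f`. -/
def mon {n : ℕ} (f : Finset (Fin n) → ℝ) : Set (Finset (Fin n)) :=
  {s | coeff f s ≠ 0 ∧ s ≠ ∅}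

/-- `W f z`: the family of sets `w ⊆ [n] ∖ z` such that `f (z ∨ w) ≠ f z`. -/
def W {n : ℕ} (f : Finset (Fin n) → ℝ) (z : Finset (Fin n)) : Set (Finset (Fin n)) :=
  {w | w ⊆ zᶜ ∧ f (z ∪ w) ≠ f z}

/-!
Substituting a single variable for each of `m` disjoint blocks, and composing with an interpolation
polynomial on `S`, turns a family of disjoint blocks sensitive at `z` into a `0/1`-valued function
`g` of sparsity at most `4 ^ (d + 1)`, where `d ≈ s log₂ r`, with `g ∅ = 0` and `g {i} = 1` for all
`i`. The expectation of `g` under the `t`-biased distribution is a polynomial in `t` bounded by `1`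
on `[0, 1]` whose derivative at `0` is `m`. Its coefficients of degree `k` sum to at most
`sparsity g * 2 ^ k` in absolute value, so truncating it at degree `d` changes it by at most `1` on
`[0, 1/8]`, and Markov's inequality at the endpoint `0` gives `m ≤ 32 d²`.

To pass to fractional packings, draw `l` sets independently from a normalised optimal packing of
weight `F`. A given point lies in two of them with probability `O(l² / F²)`. Hence the law of the
set of such points, restricted to its sensitive values and scaled by `F² / l²`, is a fractional
packing up to a constant, so this set changes the value of `f` at a base point independent of it
with probability only `O(l² / F)`. If `F` is much larger than `l²`, then for some outcome the
overlap can be absorbed into the base point, while at least half of the sets remain sensitive and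
become disjoint. So the fractional block sensitivity is `O(d⁴)`.

Finally, in any family of sensitive sets some point lies in a `1 / F` fraction of them, so the
greedy algorithm hits all minimal sensitive sets after `F log r + 1` steps: there are at most `r` of
them, because each is a monomial of `y ↦ f (z ∪ y)`.
-/

namespace SparseCube

open Finset
open scoped Function Polynomial

section MultilinearCoefficients

variable {n m : ℕ} {ι : Type*}

lemma sum_Icc_neg_one_pow_card {α : Type*} [DecidableEq α] (s t : Finset α) :
    ∑ u ∈ Icc s t, (-1 : ℝ) ^ #u = if s = t then (-1) ^ #t else 0 := by
  by_cases hst : s ⊆ t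
  · have disjoint_of_mem {u : Finset α} (hu : u ∈ (t \ s).powerset) : Disjoint s u :=
      disjoint_of_subset_right (mem_powerset.mp hu) disjoint_sdiff
    have sum_sdiff : ∑ u ∈ (t \ s).powerset, (-1 : ℝ) ^ #u = if t \ s = ∅ then 1 else 0 := by
      exact_mod_cast sum_powerset_neg_one_pow_card (x := t \ s)
    have sdiff_eq_empty : t \ s = ∅ ↔ s = t := by
      rw [sdiff_eq_empty_iff_subset]
      exact ⟨hst.antisymm, fun h ↦ h.ge⟩
    have injOn_union : Set.InjOn (s ∪ ·) ((t \ s).powerset : Set (Finset α)) := by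
      intro u hu v hv huv
      rw [← (disjoint_of_mem hu).sup_sdiff_cancel_left,
        ← (disjoint_of_mem hv).sup_sdiff_cancel_left]
      exact congrArg (· \ s) huv
    calc ∑ u ∈ Icc s t, (-1 : ℝ) ^ #u
        = ∑ u ∈ (t \ s).powerset, (-1) ^ #s * (-1) ^ #u := by
          rw [Icc_eq_image_powerset hst, sum_image injOn_union]
          exact sum_congr rfl fun u hu ↦ by
            rw [card_union_of_disjoint (disjoint_of_mem hu), pow_add]
      _ = if s = t then (-1) ^ #t else 0 := by
          rw [← mul_sum, sum_sdiff]
          simp only [sdiff_eq_empty]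
          split_ifs with h <;> simp [h]
  · rw [Icc_eq_empty hst, sum_empty, if_neg fun h ↦ hst h.le]

/-- The monomial `∏ i ∈ s, x i` as a function on the cube. -/
def monomial (s y : Finset (Fin n)) : ℝ := if s ⊆ y then 1 else 0

lemma monomial_mul_monomial (s t y : Finset (Fin n)) :
    monomial s y * monomial t y = monomial (s ∪ t) y := by
  simp only [monomial, union_subset_iff, ite_and]
  split_ifs <;> simp

lemma coeff_eq_neg_one_pow_mul (f : Finset (Fin n) → ℝ) (s : Finset (Fin n)) :
    coeff f s = (-1) ^ #s * ∑ t ∈ s.powerset, (-1) ^ #t * f t := by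
  rw [coeff, mul_sum]
  refine sum_congr rfl fun t ht ↦ ?_
  obtain ⟨k, hk⟩ := Nat.exists_eq_add_of_le (card_le_card (mem_powerset.mp ht))
  rw [hk, Nat.add_sub_cancel_left, ← mul_assoc, ← pow_add,
    show #t + k + #t = k + 2 * #t by ring, pow_add, pow_mul]
  simp

lemma coeff_add (f g : Finset (Fin n) → ℝ) (s : Finset (Fin n)) :
    coeff (fun y ↦ f y + g y) s = coeff f s + coeff g s := by
  simp only [coeff, mul_add, sum_add_distrib]

lemma coeff_sum_mul (F : Finset ι) (c : ι → ℝ) (g : ι → Finset (Fin n) → ℝ)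
    (s : Finset (Fin n)) :
    coeff (fun y ↦ ∑ a ∈ F, c a * g a y) s = ∑ a ∈ F, c a * coeff (g a) s := by
  simp only [coeff, mul_sum]
  rw [sum_comm]
  exact sum_congr rfl fun a _ ↦ sum_congr rfl fun t _ ↦ mul_left_comm _ _ _

lemma coeff_monomial (s t : Finset (Fin n)) : coeff (monomial s) t = if s = t then 1 else 0 := by
  have sum_filter_eq : ∑ u ∈ t.powerset, (-1 : ℝ) ^ #u * monomial s u
      = ∑ u ∈ Icc s t, (-1) ^ #u := by
    simp only [monomial, mul_ite, mul_one, mul_zero, ← sum_filter, Icc_eq_filter_powerset]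
  rw [coeff_eq_neg_one_pow_mul, sum_filter_eq, sum_Icc_neg_one_pow_card, mul_ite, mul_zero,
    ← mul_pow]
  simp

lemma coeff_eq_sub_of_forall_ssubset {f : Finset (Fin n) → ℝ} {s : Finset (Fin n)}
    (hs : s.Nonempty) (hf : ∀ t ⊂ s, f t = f ∅) : coeff f s = f s - f ∅ := by
  have sum_const_eq_zero : ∑ t ∈ s.powerset, (-1) ^ #t * f ∅ = 0 := by
    rw [← sum_mul, mul_eq_zero]
    exact .inl (by exact_mod_cast sum_powerset_neg_one_pow_card_of_nonempty hs)
  have sum_sub_eq : ∑ t ∈ s.powerset, (-1) ^ #t * (f t - f ∅) = (-1) ^ #s * (f s - f ∅) := by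
    refine sum_eq_single_of_mem s (mem_powerset_self s) fun t ht hts ↦ ?_
    rw [hf t ((mem_powerset.mp ht).ssubset_of_ne hts), sub_self, mul_zero]
  calc coeff f s = (-1) ^ #s * ((-1) ^ #s * (f s - f ∅)) := by
        rw [coeff_eq_neg_one_pow_mul, ← sum_sub_eq]
        simp only [mul_sub, sum_sub_distrib, sum_const_eq_zero, sub_zero]
    _ = f s - f ∅ := by rw [← mul_assoc, ← mul_pow]; simp

lemma coeff_singleton (f : Finset (Fin n) → ℝ) (i : Fin n) : coeff f {i} = f {i} - f ∅ :=
  coeff_eq_sub_of_forall_ssubset (singleton_nonempty i) fun t ht ↦ by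
    rw [ssubset_singleton_iff.mp ht]

lemma sum_coeff_mul_monomial (f : Finset (Fin n) → ℝ) (y : Finset (Fin n)) :
    ∑ s, coeff f s * monomial s y = f y := by
  calc ∑ s, coeff f s * monomial s y
      = ∑ s ∈ y.powerset, ∑ t ∈ s.powerset, (-1) ^ #s * ((-1) ^ #t * f t) := by
        simp only [monomial, mul_ite, mul_one, mul_zero, ← sum_filter, coeff_eq_neg_one_pow_mul,
          mul_sum, filter_subset_univ]
    _ = ∑ t ∈ y.powerset, ∑ s ∈ Icc t y, (-1) ^ #s * ((-1) ^ #t * f t) :=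
        sum_comm' fun s t ↦ by
          simp only [mem_powerset, mem_Icc]
          exact ⟨fun h ↦ ⟨⟨h.2, h.1⟩, h.2.trans h.1⟩, fun h ↦ ⟨h.1.2, h.1.1⟩⟩
    _ = f y := by
        simp only [← sum_mul, sum_Icc_neg_one_pow_card, ite_mul, zero_mul]
        rw [sum_ite_eq' y.powerset y, if_pos (mem_powerset_self y), ← mul_assoc, ← mul_pow]
        simp

open scoped Classical in
/-- The sets `s` with `coeff f s ≠ 0`, as a `Finset`. -/
noncomputable def support (f : Finset (Fin n) → ℝ) : Finset (Finset (Fin n)) :=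
  {s | coeff f s ≠ 0}

lemma mem_support {f : Finset (Fin n) → ℝ} {s : Finset (Fin n)} :
    s ∈ support f ↔ coeff f s ≠ 0 := by
  simp [support]

lemma card_support (f : Finset (Fin n) → ℝ) : #(support f) = sparsity f := by
  rw [sparsity, ← Set.ncard_coe_finset]
  congr 1
  ext s
  simp [mem_support]

lemma sum_support_coeff_mul (f g : Finset (Fin n) → ℝ) :
    ∑ s ∈ support f, coeff f s * g s = ∑ s, coeff f s * g s :=
  sum_subset (subset_univ _) fun s _ hs ↦ by
    rw [not_not.mp (mt mem_support.mpr hs), zero_mul]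

lemma eq_sum_support (f : Finset (Fin n) → ℝ) (y : Finset (Fin n)) :
    f y = ∑ s ∈ support f, coeff f s * monomial s y := by
  rw [sum_support_coeff_mul f (monomial · y), sum_coeff_mul_monomial]

lemma sparsity_le_card {f : Finset (Fin n) → ℝ} (F : Finset ι) (c : ι → ℝ)
    (φ : ι → Finset (Fin n)) (hf : ∀ y, f y = ∑ a ∈ F, c a * monomial (φ a) y) :
    sparsity f ≤ #F := by
  classical
  rw [← card_support]
  refine (card_le_card fun s hs ↦ ?_).trans (card_image_le (f := φ))
  by_contra hmem
  refine mem_support.mp hs ?_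
  rw [funext hf, coeff_sum_mul]
  refine sum_eq_zero fun a ha ↦ ?_
  rw [coeff_monomial, if_neg fun h ↦ hmem (mem_image.mpr ⟨a, ha, h⟩), mul_zero]

lemma sparsity_const_le_one (c : ℝ) : sparsity (fun _ : Finset (Fin n) ↦ c) ≤ 1 :=
  sparsity_le_card {()} (fun _ ↦ c) (fun _ ↦ ∅) fun y ↦ by simp [monomial]

lemma sparsity_add_le (f g : Finset (Fin n) → ℝ) :
    sparsity (fun y ↦ f y + g y) ≤ sparsity f + sparsity g := by
  simp only [← card_support]
  refine (card_le_card fun s hs ↦ ?_).trans (card_union_le _ _)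
  rw [mem_support, coeff_add] at hs
  rw [mem_union, mem_support, mem_support]
  by_contra! h
  exact hs (by rw [h.1, h.2, add_zero])

lemma sparsity_mul_le (f g : Finset (Fin n) → ℝ) :
    sparsity (fun y ↦ f y * g y) ≤ sparsity f * sparsity g := by
  rw [← card_support f, ← card_support g, ← card_product]
  refine sparsity_le_card _ (fun p ↦ coeff f p.1 * coeff g p.2) (fun p ↦ p.1 ∪ p.2) fun y ↦ ?_
  rw [eq_sum_support f y, eq_sum_support g y, sum_mul_sum, sum_product]
  exact sum_congr rfl fun s _ ↦ sum_congr rfl fun t _ ↦ by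
    rw [← monomial_mul_monomial, mul_mul_mul_comm]

lemma sparsity_prod_le (F : Finset ι) (f : ι → Finset (Fin n) → ℝ) {R : ℕ}
    (hR : ∀ a ∈ F, sparsity (f a) ≤ R) : sparsity (fun y ↦ ∏ a ∈ F, f a y) ≤ R ^ #F := by
  classical
  induction F using Finset.induction_on with
  | empty => simpa using sparsity_const_le_one 1
  | insert a F ha ih =>
    simp only [prod_insert ha, card_insert_of_notMem ha, pow_succ']
    exact (sparsity_mul_le _ _).trans <| Nat.mul_le_mul (hR a (mem_insert_self a F))
      (ih fun b hb ↦ hR b (mem_insert_of_mem hb))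

lemma sparsity_ite_eq_le {f : Finset (Fin n) → ℝ} {S : Finset ℝ} (hf : ∀ y, f y ∈ S) (v : ℝ) :
    sparsity (fun y ↦ if f y = v then 0 else 1) ≤ (sparsity f + 1) ^ #S + 1 := by
  have eq_interpolation : (fun y ↦ if f y = v then (0 : ℝ) else 1)
      = fun y ↦ 1 + -1 * ∏ u ∈ S.erase v, (f y + -u) * (v - u)⁻¹ := by
    funext y
    split_ifs with hy
    · rw [hy, prod_eq_one fun u hu ↦ ?_]
      · norm_num
      · exact mul_inv_cancel₀ (sub_ne_zero.mpr (ne_of_mem_erase hu).symm)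
    · rw [prod_eq_zero (mem_erase.mpr ⟨hy, hf y⟩) (by rw [add_neg_cancel, zero_mul])]
      norm_num
  have factor_le (u : ℝ) :
      sparsity (fun y ↦ (f y + -u) * (v - u)⁻¹) ≤ sparsity f + 1 :=
    calc sparsity (fun y ↦ (f y + -u) * (v - u)⁻¹)
        ≤ sparsity (fun y ↦ f y + -u) * 1 :=
          (sparsity_mul_le _ _).trans (Nat.mul_le_mul_left _ (sparsity_const_le_one _))
      _ ≤ sparsity f + 1 := by
          rw [mul_one]
          exact (sparsity_add_le _ _).trans (Nat.add_le_add_left (sparsity_const_le_one _) _)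
  have prod_le : sparsity (fun y ↦ ∏ u ∈ S.erase v, (f y + -u) * (v - u)⁻¹)
      ≤ (sparsity f + 1) ^ #S :=
    (sparsity_prod_le _ _ fun u _ ↦ factor_le u).trans
      (Nat.pow_le_pow_right (Nat.succ_pos _) (card_le_card (erase_subset v S)))
  rw [eq_interpolation, add_comm (_ ^ _)]
  refine (sparsity_add_le _ _).trans (add_le_add (sparsity_const_le_one 1) ?_)
  exact ((sparsity_mul_le _ _).trans (Nat.mul_le_mul (sparsity_const_le_one _) prod_le)).trans_eq
    (one_mul _)

lemma monomial_union_biUnion {b : Fin m → Finset (Fin n)} (hb : Pairwise (Disjoint on b))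
    (s z : Finset (Fin n)) (y : Finset (Fin m)) :
    monomial s (z ∪ y.biUnion b)
      = (if s ⊆ z ∪ univ.biUnion b then 1 else 0)
        * monomial ({k | ¬ Disjoint (b k) (s \ z)} : Finset (Fin m)) y := by
  have subset_iff : s ⊆ z ∪ y.biUnion b ↔
      s ⊆ z ∪ univ.biUnion b ∧ ({k | ¬ Disjoint (b k) (s \ z)} : Finset (Fin m)) ⊆ y := by
    simp only [subset_iff, mem_union, mem_biUnion, mem_univ, true_and, mem_filter,
      not_disjoint_iff, mem_sdiff]
    constructor
    · refine fun h ↦ ⟨fun i hi ↦ (h hi).imp_right fun ⟨k, _, hk⟩ ↦ ⟨k, hk⟩, ?_⟩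
      rintro k ⟨i, hik, his, hiz⟩
      obtain ⟨k', hk', hik'⟩ := (h his).resolve_left hiz
      rwa [hb.eq (not_disjoint_iff.mpr ⟨i, hik, hik'⟩)]
    · rintro ⟨hcover, hmeet⟩ i hi
      by_cases hiz : i ∈ z
      · exact .inl hiz
      · obtain ⟨k, hik⟩ := (hcover hi).resolve_left hiz
        exact .inr ⟨k, hmeet ⟨i, hik, hi, hiz⟩, hik⟩
  simp only [monomial, subset_iff, ite_and]
  split_ifs <;> simp

lemma sparsity_comp_union_biUnion_le (f : Finset (Fin n) → ℝ) {b : Fin m → Finset (Fin n)}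
    (hb : Pairwise (Disjoint on b)) (z : Finset (Fin n)) :
    sparsity (fun y ↦ f (z ∪ y.biUnion b)) ≤ sparsity f := by
  rw [← card_support f]
  refine sparsity_le_card _ (fun s ↦ coeff f s * if s ⊆ z ∪ univ.biUnion b then 1 else 0)
    (fun s ↦ {k | ¬ Disjoint (b k) (s \ z)}) fun y ↦ ?_
  rw [eq_sum_support f]
  exact sum_congr rfl fun s _ ↦ by rw [monomial_union_biUnion hb, mul_assoc]

end MultilinearCoefficients

section BlockSensitivity

variable {n m : ℕ}

lemma eval_derivative_zero_le {P : ℝ[X]} {d : ℕ} {a B : ℝ} (hdeg : P.degree ≤ d) (ha : 0 < a)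
    (hB : 0 < B) (hP : ∀ t ∈ Set.Icc 0 a, |P.eval t| ≤ B) :
    P.derivative.eval 0 ≤ 2 * d ^ 2 * B / a := by
  set ℓ : ℝ[X] := .C (a / 2) * (1 - .X) with hℓ
  set Q : ℝ[X] := .C (-B⁻¹) * P.comp ℓ with hQ
  have degree_le : Q.degree ≤ d := by
    refine Polynomial.natDegree_le_iff_degree_le.mp ?_
    have natDegree_ℓ_le : ℓ.natDegree ≤ 1 := by rw [hℓ]; compute_degree
    calc Q.natDegree ≤ P.natDegree * ℓ.natDegree :=
          (Polynomial.natDegree_C_mul_le _ _).trans Polynomial.natDegree_comp_le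
      _ ≤ d * 1 := Nat.mul_le_mul (Polynomial.natDegree_le_iff_degree_le.mpr hdeg) natDegree_ℓ_le
      _ = d := mul_one d
  have abs_eval_le_one (y : ℝ) (hy : y ∈ Set.Icc (-1) 1) : |Q.eval y| ≤ 1 := by
    have mem_Icc : a / 2 * (1 - y) ∈ Set.Icc 0 a :=
      ⟨mul_nonneg (by positivity) (by linarith [hy.2]), by nlinarith [hy.1]⟩
    have eval_eq : Q.eval y = -B⁻¹ * P.eval (a / 2 * (1 - y)) := by simp [hQ, hℓ]
    rw [eval_eq, abs_mul, abs_neg, abs_of_pos (inv_pos.mpr hB), inv_mul_le_one₀ hB]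
    exact hP _ mem_Icc
  have derivative_eval_one : Q.derivative.eval 1 = a / (2 * B) * P.derivative.eval 0 := by
    simp only [hQ, hℓ, map_neg, neg_mul, Polynomial.derivative_mul,
      Polynomial.derivative_C, Polynomial.derivative_comp, Polynomial.derivative_sub,
      Polynomial.derivative_one, Polynomial.derivative_X, Polynomial.eval_mul, Polynomial.eval_C,
      Polynomial.eval_comp, Polynomial.eval_sub, Polynomial.eval_one, Polynomial.eval_X, zero_mul,
      zero_sub, mul_neg, mul_one, zero_add, neg_neg, sub_self, mul_zero]
    field_simp
  have markov : Q.derivative.eval 1 ≤ (d : ℝ) ^ 2 := by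
    simpa [Polynomial.Chebyshev.derivative_T_eval_one] using
      Polynomial.Chebyshev.eval_iterate_derivative_le_of_forall_abs_le_one (k := 1) le_rfl
        degree_le abs_eval_le_one
  rw [derivative_eval_one] at markov
  rw [le_div_iff₀ ha]
  calc P.derivative.eval 0 * a = 2 * B * (a / (2 * B) * P.derivative.eval 0) := by field_simp
    _ ≤ 2 * B * d ^ 2 := by gcongr
    _ = 2 * d ^ 2 * B := by ring

/-- The expectation of `g` when each coordinate is `1` independently with probability `t`. -/
def biasedMean (g : Finset (Fin m) → ℝ) (t : ℝ) : ℝ :=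
  ∑ y, t ^ #y * (1 - t) ^ (m - #y) * g y

lemma biasedMean_monomial (s : Finset (Fin m)) (t : ℝ) : biasedMean (monomial s) t = t ^ #s := by
  have prod_compl (y : Finset (Fin m)) :
      ∏ i ∈ yᶜ, (if i ∈ s then 0 else 1 - t) = (1 - t) ^ (m - #y) * monomial s y := by
    by_cases hsy : s ⊆ y
    · have notMem {i : Fin m} (hi : i ∈ yᶜ) : i ∉ s := fun his ↦ mem_compl.mp hi (hsy his)
      rw [prod_congr rfl fun i hi ↦ if_neg (notMem hi), prod_const, card_compl, Fintype.card_fin,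
        monomial, if_pos hsy, mul_one]
    · obtain ⟨i, his, hiy⟩ := not_subset.mp hsy
      rw [monomial, if_neg hsy, mul_zero]
      exact prod_eq_zero (mem_compl.mpr hiy) (if_pos his)
  calc biasedMean (monomial s) t
      = ∑ y : Finset (Fin m), (∏ _i ∈ y, t) * ∏ i ∈ yᶜ, (if i ∈ s then 0 else 1 - t) := by
        simp only [biasedMean, prod_compl, prod_const, mul_assoc]
    _ = ∏ i : Fin m, (if i ∈ s then t else 1) := by
        rw [← Fintype.prod_add]
        exact prod_congr rfl fun i _ ↦ by split_ifs <;> ring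
    _ = t ^ #s := by rw [prod_ite_mem, univ_inter, prod_const]

lemma biasedMean_eq_sum_coeff (g : Finset (Fin m) → ℝ) (t : ℝ) :
    biasedMean g t = ∑ s, coeff g s * t ^ #s := by
  calc biasedMean g t
      = ∑ y, t ^ #y * (1 - t) ^ (m - #y) * ∑ s, coeff g s * monomial s y := by
        simp only [biasedMean, sum_coeff_mul_monomial]
    _ = ∑ s, coeff g s * biasedMean (monomial s) t := by
        simp only [biasedMean, mul_sum]
        rw [sum_comm]
        exact sum_congr rfl fun s _ ↦ sum_congr rfl fun y _ ↦ mul_left_comm _ _ _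
    _ = ∑ s, coeff g s * t ^ #s := by simp only [biasedMean_monomial]

lemma abs_biasedMean_le_one {g : Finset (Fin m) → ℝ} (hg : ∀ y, |g y| ≤ 1) {t : ℝ}
    (ht : t ∈ Set.Icc 0 1) : |biasedMean g t| ≤ 1 := by
  have weight_nonneg (y : Finset (Fin m)) : 0 ≤ t ^ #y * (1 - t) ^ (m - #y) :=
    mul_nonneg (pow_nonneg ht.1 _) (pow_nonneg (sub_nonneg.mpr ht.2) _)
  calc |biasedMean g t| ≤ ∑ y : Finset (Fin m), t ^ #y * (1 - t) ^ (m - #y) :=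
        (abs_sum_le_sum_abs _ _).trans <| sum_le_sum fun y _ ↦ by
          rw [abs_mul, abs_of_nonneg (weight_nonneg y)]
          exact mul_le_of_le_one_right (weight_nonneg y) (hg y)
    _ = 1 := by
        have h := Fintype.sum_pow_mul_eq_add_pow (Fin m) t (1 - t)
        rwa [Fintype.card_fin, add_sub_cancel, one_pow] at h

lemma abs_coeff_le_two_pow {g : Finset (Fin m) → ℝ} (hg : ∀ y, |g y| ≤ 1) (s : Finset (Fin m)) :
    |coeff g s| ≤ 2 ^ #s :=
  calc |coeff g s| ≤ ∑ _t ∈ s.powerset, (1 : ℝ) :=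
        (abs_sum_le_sum_abs _ _).trans <| sum_le_sum fun t _ ↦ by
          simpa [abs_mul, abs_pow] using hg t
    _ = 2 ^ #s := by simp

/-- The part of degree at most `d` of the polynomial `t ↦ biasedMean g t`. -/
noncomputable def lowDegreePart (g : Finset (Fin m) → ℝ) (d : ℕ) : ℝ[X] :=
  ∑ s with #s ≤ d, .C (coeff g s) * .X ^ #s

lemma degree_lowDegreePart_le (g : Finset (Fin m) → ℝ) (d : ℕ) :
    (lowDegreePart g d).degree ≤ d := by
  refine (Polynomial.degree_sum_le _ _).trans (Finset.sup_le fun s hs ↦ ?_)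
  exact (Polynomial.degree_C_mul_X_pow_le _ _).trans (by exact_mod_cast (mem_filter.mp hs).2)

lemma abs_biasedMean_sub_lowDegreePart_le {g : Finset (Fin m) → ℝ} (hg : ∀ y, |g y| ≤ 1) (d : ℕ)
    {t : ℝ} (ht : t ∈ Set.Icc 0 (1 / 2)) :
    |biasedMean g t - (lowDegreePart g d).eval t| ≤ sparsity g * (2 * t) ^ (d + 1) := by
  have tail_eq : biasedMean g t - (lowDegreePart g d).eval t
      = ∑ s ∈ support g, coeff g s * if #s ≤ d then 0 else t ^ #s := by
    rw [sum_support_coeff_mul g fun s ↦ if #s ≤ d then 0 else t ^ #s, biasedMean_eq_sum_coeff,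
      lowDegreePart, Polynomial.eval_finsetSum, sum_filter, ← sum_sub_distrib]
    exact sum_congr rfl fun s _ ↦ by split_ifs <;> simp
  have term_le (s : Finset (Fin m)) :
      |coeff g s * if #s ≤ d then 0 else t ^ #s| ≤ (2 * t) ^ (d + 1) := by
    have two_mul_nonneg : 0 ≤ 2 * t := by linarith [ht.1]
    split_ifs with hs
    · simpa using pow_nonneg two_mul_nonneg (d + 1)
    · calc |coeff g s * t ^ #s| ≤ 2 ^ #s * t ^ #s := by
            rw [abs_mul, abs_of_nonneg (pow_nonneg ht.1 _)]
            exact mul_le_mul_of_nonneg_right (abs_coeff_le_two_pow hg s) (pow_nonneg ht.1 _)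
        _ = (2 * t) ^ #s := (mul_pow _ _ _).symm
        _ ≤ (2 * t) ^ (d + 1) :=
            pow_le_pow_of_le_one two_mul_nonneg (by linarith [ht.2]) (not_le.mp hs)
  calc |biasedMean g t - (lowDegreePart g d).eval t|
      ≤ ∑ _s ∈ support g, (2 * t) ^ (d + 1) := by
        rw [tail_eq]
        exact (abs_sum_le_sum_abs _ _).trans (sum_le_sum fun s _ ↦ term_le s)
    _ = sparsity g * (2 * t) ^ (d + 1) := by rw [sum_const, card_support, nsmul_eq_mul]

lemma derivative_lowDegreePart_eval_zero (g : Finset (Fin m) → ℝ) {d : ℕ} (hd : 1 ≤ d) :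
    (lowDegreePart g d).derivative.eval 0 = ∑ i, (g {i} - g ∅) := by
  have eval_derivative (s : Finset (Fin m)) :
      (Polynomial.C (coeff g s) * .X ^ #s).derivative.eval 0
        = if #s = 1 then coeff g s else 0 := by
    rw [Polynomial.derivative_C_mul_X_pow, Polynomial.eval_C_mul, Polynomial.eval_X_pow]
    rcases #s with _ | _ | k <;> simp
  rw [lowDegreePart, Polynomial.derivative_sum, Polynomial.eval_finsetSum,
    sum_congr rfl fun s _ ↦ eval_derivative s, ← sum_filter, filter_filter]
  have filter_eq : ({s | #s ≤ d ∧ #s = 1} : Finset (Finset (Fin m)))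
      = univ.map ⟨singleton, singleton_injective⟩ := by
    ext s
    simp only [mem_filter, mem_univ, true_and, mem_map, Function.Embedding.coeFn_mk, card_eq_one]
    constructor
    · rintro ⟨-, i, rfl⟩
      exact ⟨i, rfl⟩
    · rintro ⟨i, rfl⟩
      exact ⟨by simpa using hd, i, rfl⟩
  rw [filter_eq, sum_map]
  exact sum_congr rfl fun i _ ↦ coeff_singleton g i

lemma sum_sub_empty_le {g : Finset (Fin m) → ℝ} (hg : ∀ y, |g y| ≤ 1) {d : ℕ} (hd : 1 ≤ d)
    (hsparse : sparsity g ≤ 4 ^ (d + 1)) : ∑ i, (g {i} - g ∅) ≤ 32 * d ^ 2 := by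
  have abs_eval_le_two (t : ℝ) (ht : t ∈ Set.Icc 0 (1 / 8)) :
      |(lowDegreePart g d).eval t| ≤ 2 := by
    have tail_le_one : |biasedMean g t - (lowDegreePart g d).eval t| ≤ 1 :=
      calc |biasedMean g t - (lowDegreePart g d).eval t|
          ≤ sparsity g * (2 * t) ^ (d + 1) :=
            abs_biasedMean_sub_lowDegreePart_le hg d ⟨ht.1, ht.2.trans (by norm_num)⟩
        _ ≤ 4 ^ (d + 1) * (1 / 4) ^ (d + 1) := by
            have := ht.1
            gcongr
            · exact_mod_cast hsparse
            · linarith [ht.2]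
        _ = 1 := by rw [← mul_pow]; norm_num
    have mean_le_one := abs_biasedMean_le_one hg ⟨ht.1, ht.2.trans (by norm_num)⟩
    rw [abs_le] at *
    constructor <;> linarith
  calc ∑ i, (g {i} - g ∅) = (lowDegreePart g d).derivative.eval 0 :=
        (derivative_lowDegreePart_eval_zero g hd).symm
    _ ≤ 2 * d ^ 2 * 2 / (1 / 8) :=
        eval_derivative_zero_le (degree_lowDegreePart_le g d) (by norm_num) (by norm_num)
          abs_eval_le_two
    _ = 32 * d ^ 2 := by ring

/-- The block sensitivity of `f` is at most `M`: every family of pairwise disjoint sets whose union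
with a common base point `z` changes the value `f z` has at most `M` members. Blocks may meet `z`,
and the value may only be changed by turning coordinates on. -/
def BlockSensLE {α β : Type*} [DecidableEq α] (f : Finset α → β) (M : ℕ) : Prop :=
  ∀ (z : Finset α) (m : ℕ) (b : Fin m → Finset α), Pairwise (Disjoint on b) →
    (∀ j, f (z ∪ b j) ≠ f z) → m ≤ M

lemma nonempty_of_union_ne {α β : Type*} [DecidableEq α] {f : Finset α → β} {z w : Finset α}
    (hw : f (z ∪ w) ≠ f z) : w.Nonempty := by
  rw [nonempty_iff_ne_empty]
  rintro rfl
  exact hw (by rw [union_empty])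

lemma BlockSensLE.card_le {ι α β : Type*} [DecidableEq α] {f : Finset α → β} {M : ℕ}
    (hM : BlockSensLE f M) (z : Finset α) (J : Finset ι) (b : ι → Finset α)
    (hdisj : (J : Set ι).PairwiseDisjoint b) (hsens : ∀ j ∈ J, f (z ∪ b j) ≠ f z) : #J ≤ M := by
  refine hM z #J (fun k ↦ b (J.equivFin.symm k)) (fun k l hkl ↦ ?_) fun k ↦
    hsens _ (J.equivFin.symm k).2
  exact hdisj (J.equivFin.symm k).2 (J.equivFin.symm l).2
    (Subtype.coe_ne_coe.mpr (J.equivFin.symm.injective.ne hkl))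

lemma blockSensLE_of_sparsity_le {f : Finset (Fin n) → ℝ} {S : Finset ℝ} (hf : ∀ y, f y ∈ S)
    {d : ℕ} (hd : 1 ≤ d) (hsparse : (sparsity f + 1) ^ #S + 1 ≤ 4 ^ (d + 1)) :
    BlockSensLE f (32 * d ^ 2) := by
  intro z m b hdisj hsens
  set h : Finset (Fin m) → ℝ := fun y ↦ f (z ∪ y.biUnion b)
  set g : Finset (Fin m) → ℝ := fun y ↦ if h y = f z then 0 else 1
  have sparsity_g_le : sparsity g ≤ 4 ^ (d + 1) := by
    refine ((sparsity_ite_eq_le (fun y ↦ hf _) (f z)).trans ?_).trans hsparse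
    gcongr
    exact sparsity_comp_union_biUnion_le f hdisj z
  have abs_g_le_one (y : Finset (Fin m)) : |g y| ≤ 1 := by
    dsimp only [g]
    split_ifs <;> simp
  have g_singleton_sub (i : Fin m) : g {i} - g ∅ = 1 := by simp [g, h, hsens i]
  have := sum_sub_empty_le abs_g_le_one hd sparsity_g_le
  simp only [g_singleton_sub, sum_const, card_univ, Fintype.card_fin, nsmul_eq_mul, mul_one] at this
  exact_mod_cast this

end BlockSensitivity

section FractionalPacking

variable {α β Ω : Type*} [Fintype α] [DecidableEq α] [Fintype Ω] {f : Finset α → β} {z : Finset α}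

/-- `μ` is a fractional packing of the sets `w` with `f (z ∪ w) ≠ f z`: a nonnegative weight
supported on these sets and giving total weight at most `1` to the sets through any one point. -/
structure IsFracPacking (f : Finset α → β) (z : Finset α) (μ : Finset α → ℝ) : Prop where
  nonneg : ∀ w, 0 ≤ μ w
  ne_of_ne_zero : ∀ w, μ w ≠ 0 → f (z ∪ w) ≠ f z
  load_le_one : ∀ i, ∑ w with i ∈ w, μ w ≤ 1

/-- The fractional block sensitivity of `f`: the largest total weight of a fractional packing,
over all base points. Only the direction of turning coordinates on is taken into account. -/
noncomputable def fracBlockSens (f : Finset α → β) : ℝ :=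
  sSup {v | ∃ z μ, IsFracPacking f z μ ∧ v = ∑ w, μ w}

lemma IsFracPacking.sum_le_card {μ : Finset α → ℝ} (hμ : IsFracPacking f z μ) :
    ∑ w, μ w ≤ Fintype.card α := by
  have le_card_mul (w : Finset α) : μ w ≤ ∑ _i ∈ w, μ w := by
    rcases eq_or_ne (μ w) 0 with h | h
    · simp [h]
    · obtain ⟨i, hi⟩ := nonempty_of_union_ne (hμ.ne_of_ne_zero w h)
      exact single_le_sum (f := fun _ ↦ μ w) (fun _ _ ↦ hμ.nonneg w) hi
  calc ∑ w, μ w ≤ ∑ w, ∑ _i ∈ w, μ w := sum_le_sum fun w _ ↦ le_card_mul w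
    _ = ∑ i, ∑ w with i ∈ w, μ w := sum_comm' fun w i ↦ by simp
    _ ≤ ∑ _i : α, (1 : ℝ) := sum_le_sum fun i _ ↦ hμ.load_le_one i
    _ = Fintype.card α := by simp

lemma IsFracPacking.sum_le_fracBlockSens {μ : Finset α → ℝ} (hμ : IsFracPacking f z μ) :
    ∑ w, μ w ≤ fracBlockSens f := by
  refine le_csSup ⟨Fintype.card α, ?_⟩ ⟨z, μ, hμ, rfl⟩
  rintro _ ⟨z', μ', hμ', rfl⟩
  exact hμ'.sum_le_card

lemma isFracPacking_zero (f : Finset α → β) (z : Finset α) : IsFracPacking f z fun _ ↦ 0 :=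
  ⟨fun _ ↦ le_rfl, fun _ h ↦ absurd rfl h, fun _ ↦ by simp⟩

lemma fracBlockSens_nonneg (f : Finset α → β) : 0 ≤ fracBlockSens f := by
  simpa using (isFracPacking_zero f ∅).sum_le_fracBlockSens

lemma exists_isFracPacking_lt_sum {v : ℝ} (hv : v < fracBlockSens f) :
    ∃ z μ, IsFracPacking f z μ ∧ v < ∑ w, μ w := by
  by_contra! h
  refine hv.not_ge (csSup_le ⟨_, ∅, _, isFracPacking_zero f ∅, rfl⟩ ?_)
  rintro _ ⟨z, μ, hμ, rfl⟩
  exact h z μ hμ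

lemma sum_filter_ne_le_mul_fracBlockSens [DecidableEq β] (z : Finset α) {ν : Ω → ℝ}
    (hν : ∀ ω, 0 ≤ ν ω) (v : Ω → Finset α) {c : ℝ} (hc : 0 ≤ c)
    (hload : ∀ i, ∑ ω with i ∈ v ω, ν ω ≤ c) :
    ∑ ω with f (z ∪ v ω) ≠ f z, ν ω ≤ c * fracBlockSens f := by
  rcases hc.eq_or_lt with rfl | hc
  · rw [zero_mul]
    refine sum_nonpos fun ω hω ↦ ?_
    obtain ⟨i, hi⟩ := nonempty_of_union_ne (mem_filter.mp hω).2
    exact (single_le_sum (fun ω _ ↦ hν ω) (mem_filter.mpr ⟨mem_univ ω, hi⟩)).trans (hload i)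
  set E : Finset Ω := {ω | f (z ∪ v ω) ≠ f z}
  set μ : Finset α → ℝ := fun w ↦ (∑ ω ∈ E with v ω = w, ν ω) / c
  have isFracPacking : IsFracPacking f z μ := by
    refine ⟨fun w ↦ div_nonneg (sum_nonneg fun ω _ ↦ hν ω) hc.le, fun w hw ↦ ?_, fun i ↦ ?_⟩
    · obtain ⟨ω, hω, -⟩ := exists_ne_zero_of_sum_ne_zero (div_ne_zero_iff.mp hw).1
      obtain ⟨hωE, rfl⟩ := mem_filter.mp hω
      exact (mem_filter.mp hωE).2
    · rw [← sum_div, div_le_one hc, sum_fiberwise_eq_sum_filter]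
      refine (sum_le_sum_of_subset_of_nonneg ?_ fun ω _ _ ↦ hν ω).trans (hload i)
      intro ω hω
      simpa using (mem_filter.mp hω).2
  have sum_eq : ∑ w, μ w = (∑ ω ∈ E, ν ω) / c := by
    rw [← sum_div, sum_fiberwise]
  rw [← div_le_iff₀' hc, ← sum_eq]
  exact isFracPacking.sum_le_fracBlockSens

end FractionalPacking

section ProductWeights

variable {ι Ω : Type*} [Fintype ι] [Fintype Ω] {p : Ω → ℝ}

lemma exists_pos_and_le_of_sum_mul_le {Y : Ω → ℝ} {A : ℝ} (hp : ∀ ω, 0 ≤ p ω)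
    (hsum : ∑ ω, p ω = 1) (hA : ∑ ω, p ω * Y ω ≤ A) : ∃ ω, 0 < p ω ∧ Y ω ≤ A := by
  by_contra! h
  obtain ⟨ω₀, -, hω₀⟩ := exists_ne_zero_of_sum_ne_zero (hsum.trans_ne one_ne_zero)
  have pos : 0 < p ω₀ := (hp ω₀).lt_of_ne' hω₀
  refine hA.not_gt ?_
  calc A = ∑ ω, p ω * A := by rw [← sum_mul, hsum, one_mul]
    _ < ∑ ω, p ω * Y ω := by
        refine sum_lt_sum (fun ω _ ↦ ?_) ⟨ω₀, mem_univ _, mul_lt_mul_of_pos_left (h _ pos) pos⟩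
        rcases (hp ω).eq_or_lt with h₀ | h₀
        · simp [← h₀]
        · exact mul_le_mul_of_nonneg_left (h ω h₀).le h₀.le

variable [DecidableEq ι]

lemma sum_prod_eq_one (hsum : ∑ x, p x = 1) : ∑ ω : ι → Ω, ∏ k, p (ω k) = 1 := by
  rw [← Fintype.piFinset_univ, ← prod_univ_sum, hsum, prod_const_one]

lemma sum_filter_mem_mem_prod [DecidableEq Ω] (hsum : ∑ x, p x = 1) (A : Finset Ω) {a b : ι}
    (hab : a ≠ b) :
    ∑ ω : ι → Ω with ω a ∈ A ∧ ω b ∈ A, ∏ k, p (ω k) = (∑ x ∈ A, p x) ^ 2 := by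
  have filter_eq : ({ω | ω a ∈ A ∧ ω b ∈ A} : Finset (ι → Ω))
      = Fintype.piFinset fun k ↦ if k ∈ ({a, b} : Finset ι) then A else univ := by
    ext ω
    simp only [mem_filter, mem_univ, true_and, Fintype.mem_piFinset, mem_insert, mem_singleton]
    refine ⟨fun h k ↦ ?_, fun h ↦ ⟨by simpa using h a, by simpa using h b⟩⟩
    split_ifs with hk
    · rcases hk with rfl | rfl
      exacts [h.1, h.2]
    · exact mem_univ _
  calc ∑ ω : ι → Ω with ω a ∈ A ∧ ω b ∈ A, ∏ k, p (ω k)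
      = ∏ k, if k ∈ ({a, b} : Finset ι) then ∑ x ∈ A, p x else 1 := by
        rw [filter_eq, ← prod_univ_sum]
        exact prod_congr rfl fun k _ ↦ by split_ifs <;> simp [hsum]
    _ = (∑ x ∈ A, p x) ^ 2 := by rw [prod_ite_mem, univ_inter, prod_const, card_pair hab]

end ProductWeights

section RandomBlocks

variable {ι α β : Type*} [Fintype ι] [DecidableEq ι] [Fintype α] [DecidableEq α]

/-- The points lying in at least two members of the family `ω`. -/
def overlap (ω : ι → Finset α) : Finset α := {i | ∃ a b, a ≠ b ∧ i ∈ ω a ∧ i ∈ ω b}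

/-- The points lying in at least two members of the family `ω` other than `ω j`. As a function of
a random family with independent members, this set is independent of `ω j`. -/
def overlapExcept (ω : ι → Finset α) (j : ι) : Finset α := overlap fun k : {k // k ≠ j} ↦ ω k

/-- A measure of how far `ω` is from giving disjoint sensitive blocks at `z ∪ overlap ω`: the
number of `j` for which adding `overlapExcept ω j` to `z ∪ ω j` changes the value of `f`, plus a
penalty of `card ι` if adding `overlap ω` to `z` does. -/
def damage [DecidableEq β] (f : Finset α → β) (z : Finset α) (ω : ι → Finset α) : ℝ :=
  (if f (z ∪ overlap ω) ≠ f z then (Fintype.card ι : ℝ) else 0)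
    + #{j | f (z ∪ ω j ∪ overlapExcept ω j) ≠ f (z ∪ ω j)}

lemma disjoint_sdiff_overlap (ω : ι → Finset α) {a b : ι} (hab : a ≠ b) :
    Disjoint (ω a \ overlap ω) (ω b \ overlap ω) := by
  refine disjoint_left.mpr fun i ha hb ↦ (mem_sdiff.mp ha).2 ?_
  exact mem_filter.mpr ⟨mem_univ i, a, b, hab, (mem_sdiff.mp ha).1, (mem_sdiff.mp hb).1⟩

lemma union_overlapExcept (ω : ι → Finset α) (j : ι) :
    ω j ∪ overlapExcept ω j = ω j ∪ overlap ω := by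
  ext i
  simp only [overlapExcept, overlap, mem_union, mem_filter, mem_univ, true_and]
  refine or_congr_right' fun hij ↦ ⟨?_, ?_⟩
  · rintro ⟨a, b, hab, ha, hb⟩
    exact ⟨a, b, Subtype.coe_ne_coe.mpr hab, ha, hb⟩
  · rintro ⟨a, b, hab, ha, hb⟩
    have ne_of_mem {c : ι} (hc : i ∈ ω c) : c ≠ j := by rintro rfl; exact hij hc
    exact ⟨⟨a, ne_of_mem ha⟩, ⟨b, ne_of_mem hb⟩, Subtype.coe_ne_coe.mp hab, ha, hb⟩

lemma BlockSensLE.card_le_add_damage [DecidableEq β] {f : Finset α → β} {M : ℕ}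
    (hM : BlockSensLE f M) {z : Finset α} {ω : ι → Finset α} (hsens : ∀ j, f (z ∪ ω j) ≠ f z) :
    Fintype.card ι ≤ M + damage f z ω := by
  by_cases hover : f (z ∪ overlap ω) = f z
  · have union_eq (j : ι) : z ∪ overlap ω ∪ ω j \ overlap ω = z ∪ ω j ∪ overlapExcept ω j := by
      rw [union_assoc, union_sdiff_self_eq_union, union_comm (overlap ω), ← union_overlapExcept,
        union_assoc]
    have card_good_le : #{j | f (z ∪ ω j ∪ overlapExcept ω j) = f (z ∪ ω j)} ≤ M := by
      refine hM.card_le (z ∪ overlap ω) _ (fun j ↦ ω j \ overlap ω)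
        (fun a _ b _ hab ↦ disjoint_sdiff_overlap ω hab) fun j hj ↦ ?_
      rw [union_eq, (mem_filter.mp hj).2, hover]
      exact hsens j
    rw [damage, if_neg (not_not.mpr hover), zero_add, ← card_univ,
      ← card_filter_add_card_filter_not fun j ↦ f (z ∪ ω j ∪ overlapExcept ω j) = f (z ∪ ω j)]
    exact_mod_cast Nat.add_le_add_right card_good_le _
  · rw [damage, if_pos hover, ← add_assoc, add_right_comm]
    exact le_add_of_nonneg_left (by positivity)

variable {D : Finset α → ℝ} {θ : ℝ}

lemma sum_filter_mem_overlap_le (hD : ∀ w, 0 ≤ D w) (hsum : ∑ w, D w = 1)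
    (hθ : ∀ i, ∑ w with i ∈ w, D w ≤ θ) (i : α) :
    ∑ ω : ι → Finset α with i ∈ overlap ω, ∏ k, D (ω k) ≤ Fintype.card ι ^ 2 * θ ^ 2 := by
  have pair_le {q : ι × ι} (hq : q ∈ (univ : Finset ι).offDiag) :
      ∑ ω : ι → Finset α with i ∈ ω q.1 ∧ i ∈ ω q.2, ∏ k, D (ω k) ≤ θ ^ 2 := by
    have sum_eq := sum_filter_mem_mem_prod hsum {w | i ∈ w} (mem_offDiag.mp hq).2.2
    simp only [mem_filter, mem_univ, true_and] at sum_eq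
    exact sum_eq.trans_le (pow_le_pow_left₀ (sum_nonneg fun w _ ↦ hD w) (hθ i) 2)
  calc ∑ ω : ι → Finset α with i ∈ overlap ω, ∏ k, D (ω k)
      ≤ ∑ ω : ι → Finset α, ∑ q ∈ (univ : Finset ι).offDiag,
          if i ∈ ω q.1 ∧ i ∈ ω q.2 then ∏ k, D (ω k) else 0 := by
        rw [sum_filter]
        refine sum_le_sum fun ω _ ↦ ?_
        have term_nonneg (q : ι × ι) :
            0 ≤ if i ∈ ω q.1 ∧ i ∈ ω q.2 then ∏ k, D (ω k) else 0 := by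
          split_ifs
          exacts [prod_nonneg fun k _ ↦ hD _, le_rfl]
        split_ifs with hi
        · obtain ⟨a, b, hab, hia, hib⟩ := (mem_filter.mp hi).2
          have mem : (a, b) ∈ (univ : Finset ι).offDiag := by simpa using hab
          refine le_trans ?_ (single_le_sum (fun q _ ↦ term_nonneg q) mem)
          rw [if_pos ⟨hia, hib⟩]
        · exact sum_nonneg fun q _ ↦ term_nonneg q
    _ = ∑ q ∈ (univ : Finset ι).offDiag,
          ∑ ω : ι → Finset α with i ∈ ω q.1 ∧ i ∈ ω q.2, ∏ k, D (ω k) := by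
        simp only [sum_filter]
        exact sum_comm
    _ ≤ ∑ _q ∈ (univ : Finset ι).offDiag, θ ^ 2 := sum_le_sum fun q hq ↦ pair_le hq
    _ ≤ Fintype.card ι ^ 2 * θ ^ 2 := by
        rw [sum_const, nsmul_eq_mul, offDiag_card, card_univ]
        gcongr
        exact_mod_cast (Nat.sub_le _ _).trans_eq (sq _).symm

lemma sum_filter_overlap_ne_le [DecidableEq β] (f : Finset α → β) (hD : ∀ w, 0 ≤ D w)
    (hsum : ∑ w, D w = 1) (hθ : ∀ i, ∑ w with i ∈ w, D w ≤ θ) (z : Finset α) :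
    ∑ ω : ι → Finset α with f (z ∪ overlap ω) ≠ f z, ∏ k, D (ω k)
      ≤ Fintype.card ι ^ 2 * θ ^ 2 * fracBlockSens f :=
  sum_filter_ne_le_mul_fracBlockSens z (fun _ ↦ prod_nonneg fun _ _ ↦ hD _) overlap (by positivity)
    (sum_filter_mem_overlap_le hD hsum hθ)

lemma sum_filter_overlapExcept_ne_le [DecidableEq β] (f : Finset α → β) (hD : ∀ w, 0 ≤ D w)
    (hsum : ∑ w, D w = 1) (hθ : ∀ i, ∑ w with i ∈ w, D w ≤ θ) (z : Finset α) (j : ι) :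
    ∑ ω : ι → Finset α with f (z ∪ ω j ∪ overlapExcept ω j) ≠ f (z ∪ ω j), ∏ k, D (ω k)
      ≤ Fintype.card ι ^ 2 * θ ^ 2 * fracBlockSens f := by
  have conditional_le (w : Finset α) :
      ∑ ω : {k // k ≠ j} → Finset α with f (z ∪ w ∪ overlap ω) ≠ f (z ∪ w), ∏ k, D (ω k)
        ≤ Fintype.card ι ^ 2 * θ ^ 2 * fracBlockSens f := by
    refine (sum_filter_overlap_ne_le f hD hsum hθ (z ∪ w)).trans ?_
    have := fracBlockSens_nonneg f
    gcongr
    exact Fintype.card_subtype_le _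
  calc ∑ ω : ι → Finset α with f (z ∪ ω j ∪ overlapExcept ω j) ≠ f (z ∪ ω j), ∏ k, D (ω k)
      = ∑ w, D w * ∑ ω : {k // k ≠ j} → Finset α with f (z ∪ w ∪ overlap ω) ≠ f (z ∪ w),
          ∏ k, D (ω k) := by
        simp only [sum_filter, mul_sum, mul_ite, mul_zero]
        rw [← Fintype.sum_prod_type', ← (Equiv.funSplitAt j (Finset α)).sum_comp]
        refine sum_congr rfl fun ω _ ↦ ?_
        rw [Fintype.prod_eq_mul_prod_subtype_ne _ j]
        rfl
    _ ≤ ∑ w, D w * (Fintype.card ι ^ 2 * θ ^ 2 * fracBlockSens f) :=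
        sum_le_sum fun w _ ↦ mul_le_mul_of_nonneg_left (conditional_le w) (hD w)
    _ = Fintype.card ι ^ 2 * θ ^ 2 * fracBlockSens f := by rw [← sum_mul, hsum, one_mul]

lemma sum_prod_mul_damage_le [DecidableEq β] (f : Finset α → β) (hD : ∀ w, 0 ≤ D w)
    (hsum : ∑ w, D w = 1) (hθ : ∀ i, ∑ w with i ∈ w, D w ≤ θ) (z : Finset α) :
    ∑ ω : ι → Finset α, (∏ k, D (ω k)) * damage f z ω
      ≤ 2 * Fintype.card ι ^ 3 * θ ^ 2 * fracBlockSens f := by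
  set l := (Fintype.card ι : ℝ)
  calc ∑ ω : ι → Finset α, (∏ k, D (ω k)) * damage f z ω
      = l * (∑ ω : ι → Finset α with f (z ∪ overlap ω) ≠ f z, ∏ k, D (ω k))
        + ∑ j, ∑ ω : ι → Finset α with f (z ∪ ω j ∪ overlapExcept ω j) ≠ f (z ∪ ω j),
            ∏ k, D (ω k) := by
        simp only [damage, mul_add, sum_add_distrib, card_filter, Nat.cast_sum, mul_sum, sum_filter]
        rw [sum_comm (s := (univ : Finset ι))]
        congr 1 <;> simp [l, mul_comm]
    _ ≤ l * (l ^ 2 * θ ^ 2 * fracBlockSens f) + ∑ _j : ι, l ^ 2 * θ ^ 2 * fracBlockSens f := by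
        gcongr
        · exact sum_filter_overlap_ne_le f hD hsum hθ z
        · exact sum_filter_overlapExcept_ne_le f hD hsum hθ z _
    _ = 2 * l ^ 3 * θ ^ 2 * fracBlockSens f := by
        rw [sum_const, card_univ, nsmul_eq_mul]
        ring

theorem BlockSensLE.fracBlockSens_lt {f : Finset α → β} {M : ℕ} (hM : BlockSensLE f M) :
    fracBlockSens f < 64 * (M + 1) ^ 2 := by
  classical
  by_contra! hge
  set F := fracBlockSens f
  have F_pos : 0 < F := lt_of_lt_of_le (by positivity) hge
  obtain ⟨z, μ, hμ, htotal⟩ := exists_isFracPacking_lt_sum (half_lt_self F_pos)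
  set T := ∑ w, μ w
  have T_pos : 0 < T := (half_pos F_pos).trans htotal
  set D : Finset α → ℝ := fun w ↦ μ w / T
  have D_nonneg (w : Finset α) : 0 ≤ D w := div_nonneg (hμ.nonneg w) T_pos.le
  have sum_D : ∑ w, D w = 1 := by rw [← sum_div, div_self T_pos.ne']
  have D_load_le (i : α) : ∑ w with i ∈ w, D w ≤ 1 / T := by
    rw [← sum_div]
    exact div_le_div_of_nonneg_right (hμ.load_le_one i) T_pos.le
  obtain ⟨ω, ω_pos, damage_le⟩ := exists_pos_and_le_of_sum_mul_le
    (fun ω : Fin (2 * (M + 1)) → Finset α ↦ prod_nonneg fun k _ ↦ D_nonneg (ω k))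
    (sum_prod_eq_one sum_D) (sum_prod_mul_damage_le f D_nonneg sum_D D_load_le z)
  have sens (j : Fin (2 * (M + 1))) : f (z ∪ ω j) ≠ f z := by
    refine hμ.ne_of_ne_zero _ fun h ↦ ω_pos.ne' (prod_eq_zero (mem_univ j) ?_)
    simp only [D, h, zero_div]
  have card_le := hM.card_le_add_damage sens
  have mean_le : 2 * (2 * (M + 1) : ℝ) ^ 3 * (1 / T) ^ 2 * F ≤ M + 1 := by
    have le_sq : 16 * (M + 1) ^ 2 * F ≤ T ^ 2 :=
      calc 16 * (M + 1) ^ 2 * F ≤ F / 4 * F := by gcongr; linarith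
        _ = (F / 2) ^ 2 := by ring
        _ ≤ T ^ 2 := by gcongr
    calc 2 * (2 * (M + 1) : ℝ) ^ 3 * (1 / T) ^ 2 * F
        = (M + 1 : ℝ) * (16 * (M + 1) ^ 2 * F / T ^ 2) := by ring
      _ ≤ (M + 1 : ℝ) * 1 := by gcongr; exact div_le_one_of_le₀ le_sq (by positivity)
      _ = M + 1 := mul_one _
  rw [Fintype.card_fin] at card_le damage_le
  push_cast at card_le damage_le
  linarith

end RandomBlocks

section GreedyHitting

variable {n : ℕ} {α β : Type*} [DecidableEq α]

lemma exists_card_disjoint_le_pow_mul {G : Finset (Finset α)} {K : ℝ} (hK : 1 ≤ K)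
    (hG : ∀ F ⊆ G, F.Nonempty → ∃ i, #F ≤ K * #{w ∈ F | i ∈ w}) (t : ℕ) :
    ∃ H : Finset α, #H ≤ t ∧ #{w ∈ G | Disjoint H w} ≤ (1 - 1 / K) ^ t * #G := by
  have ratio_nonneg : 0 ≤ 1 - 1 / K := sub_nonneg.mpr (div_le_one_of_le₀ hK (by positivity))
  induction t with
  | zero => exact ⟨∅, by simp, by simp⟩
  | succ t ih =>
    obtain ⟨H, hHt, hHG⟩ := ih
    set F : Finset (Finset α) := {w ∈ G | Disjoint H w}
    rcases F.eq_empty_or_nonempty with hF | hF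
    · refine ⟨H, hHt.trans t.le_succ, ?_⟩
      change (#F : ℝ) ≤ _
      rw [hF, card_empty, Nat.cast_zero]
      positivity
    obtain ⟨i, hi⟩ := hG F (filter_subset _ _) hF
    refine ⟨insert i H, (card_insert_le i H).trans (Nat.succ_le_succ hHt), ?_⟩
    have unhit_eq : ({w ∈ G | Disjoint (insert i H) w} : Finset _) = {w ∈ F | i ∉ w} := by
      rw [filter_filter]
      simp only [disjoint_insert_left, and_comm]
    have card_add : #{w ∈ F | i ∈ w} + (#{w ∈ F | i ∉ w} : ℝ) = #F := by
      exact_mod_cast card_filter_add_card_filter_not (s := F) (i ∈ ·)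
    have hit_ge : #F / K ≤ #{w ∈ F | i ∈ w} := (div_le_iff₀' (by positivity)).mpr hi
    calc (#{w ∈ G | Disjoint (insert i H) w} : ℝ) = #{w ∈ F | i ∉ w} := by rw [unhit_eq]
      _ ≤ (1 - 1 / K) * #F := by rw [sub_mul, one_mul, one_div_mul_eq_div]; linarith
      _ ≤ (1 - 1 / K) * ((1 - 1 / K) ^ t * #G) := by gcongr
      _ = (1 - 1 / K) ^ (t + 1) * #G := by ring

lemma exists_hittingSet_card_le {G : Finset (Finset α)} {K : ℝ}
    (hG : ∀ F ⊆ G, F.Nonempty → ∃ i, #F ≤ K * #{w ∈ F | i ∈ w}) :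
    ∃ H : Finset α, (∀ w ∈ G, ¬ Disjoint H w) ∧ #H ≤ K * Real.log #G + 1 := by
  rcases G.eq_empty_or_nonempty with rfl | hne
  · exact ⟨∅, by simp, by simp⟩
  have card_pos : (0 : ℝ) < #G := by exact_mod_cast hne.card_pos
  have one_le_K : 1 ≤ K := by
    obtain ⟨i, hi⟩ := hG G Subset.rfl hne
    have filter_card_pos : (0 : ℝ) < #{w ∈ G | i ∈ w} := by
      refine (Nat.cast_nonneg _).lt_of_ne fun h ↦ hi.not_gt ?_
      rwa [← h, mul_zero]
    refine le_of_mul_le_mul_right (le_trans ?_ hi) filter_card_pos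
    exact_mod_cast (one_mul _).trans_le (card_filter_le _ _)
  set t := ⌊K * Real.log #G⌋₊ + 1
  obtain ⟨H, hHt, hHG⟩ := exists_card_disjoint_le_pow_mul one_le_K hG t
  have unhit_lt_one : (#{w ∈ G | Disjoint H w} : ℝ) < 1 :=
    calc (#{w ∈ G | Disjoint H w} : ℝ) ≤ (1 - 1 / K) ^ t * #G := hHG
      _ ≤ Real.exp (-(1 / K)) ^ t * #G := by
          gcongr
          · exact sub_nonneg.mpr (div_le_one_of_le₀ one_le_K (by positivity))
          · exact Real.one_sub_le_exp_neg _
      _ < Real.exp (-Real.log #G) * #G := by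
          rw [← Real.exp_nat_mul]
          gcongr
          rw [mul_neg, mul_one_div, neg_lt_neg_iff, lt_div_iff₀' (by positivity)]
          exact_mod_cast Nat.lt_floor_add_one _
      _ = 1 := by rw [Real.exp_neg, Real.exp_log card_pos, inv_mul_cancel₀ card_pos.ne']
  refine ⟨H, fun w hw hdisj ↦ ?_, ?_⟩
  · have unhit_eq_empty : ({w ∈ G | Disjoint H w} : Finset _) = ∅ :=
      card_eq_zero.mp (Nat.lt_one_iff.mp (by exact_mod_cast unhit_lt_one))
    exact notMem_empty w (unhit_eq_empty ▸ mem_filter.mpr ⟨hw, hdisj⟩)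
  · calc (#H : ℝ) ≤ t := by exact_mod_cast hHt
      _ ≤ K * Real.log #G + 1 := by
          rw [Nat.cast_add_one]
          gcongr
          exact Nat.floor_le (by positivity)

lemma exists_card_le_fracBlockSens_mul [Fintype α] {f : Finset α → β} {z : Finset α}
    {F : Finset (Finset α)} (hF : F.Nonempty) (hsens : ∀ w ∈ F, f (z ∪ w) ≠ f z) :
    ∃ i, #F ≤ fracBlockSens f * #{w ∈ F | i ∈ w} := by
  classical
  obtain ⟨w₀, hw₀⟩ := hF
  obtain ⟨i₀, -⟩ := nonempty_of_union_ne (hsens w₀ hw₀)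
  obtain ⟨i, -, hi⟩ := exists_max_image univ (fun i ↦ #{w ∈ F | i ∈ w}) ⟨i₀, mem_univ i₀⟩
  refine ⟨i, ?_⟩
  have load_le (j : α) :
      ∑ w with j ∈ w, (if w ∈ F then 1 else 0 : ℝ) ≤ #{w ∈ F | i ∈ w} := by
    have filter_eq : ({w ∈ {w | j ∈ w} | w ∈ F} : Finset (Finset α)) = {w ∈ F | j ∈ w} := by
      ext w
      simp [and_comm]
    rw [sum_boole, filter_eq]
    exact_mod_cast hi j (mem_univ j)
  have filter_eq : ({w ∈ {w | f (z ∪ w) ≠ f z} | w ∈ F} : Finset (Finset α)) = F := by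
    ext w
    simpa using hsens w
  calc (#F : ℝ) = ∑ w with f (z ∪ w) ≠ f z, if w ∈ F then 1 else 0 := by
        rw [sum_boole, filter_eq]
    _ ≤ #{w ∈ F | i ∈ w} * fracBlockSens f :=
        sum_filter_ne_le_mul_fracBlockSens z (fun w ↦ by split_ifs <;> norm_num) id
          (Nat.cast_nonneg _) load_le
    _ = fracBlockSens f * #{w ∈ F | i ∈ w} := mul_comm _ _

lemma card_minimal_le_sparsity (f : Finset (Fin n) → ℝ) (z : Finset (Fin n))
    (G : Finset (Finset (Fin n))) (hG : ∀ w ∈ G, Minimal (fun w ↦ f (z ∪ w) ≠ f z) w) :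
    #G ≤ sparsity f := by
  set g : Finset (Fin n) → ℝ := fun y ↦ f (z ∪ y)
  have sparsity_g_le : sparsity g ≤ sparsity f := by
    have singletons_disjoint : Pairwise (Disjoint on (singleton : Fin n → Finset (Fin n))) :=
      fun _ _ hij ↦ disjoint_singleton.mpr hij
    simpa only [biUnion_singleton_eq_self] using
      sparsity_comp_union_biUnion_le f singletons_disjoint z
  rw [← card_support g] at sparsity_g_le
  refine (card_le_card fun w hw ↦ mem_support.mpr ?_).trans sparsity_g_le
  have g_empty : g ∅ = f z := congrArg f (union_empty z)
  have g_ssubset (t : Finset (Fin n)) (ht : t ⊂ w) : g t = g ∅ :=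
    g_empty ▸ not_not.mp ((hG w hw).not_prop_of_lt ht)
  rw [coeff_eq_sub_of_forall_ssubset (nonempty_of_union_ne (hG w hw).prop) g_ssubset, g_empty]
  exact sub_ne_zero.mpr (hG w hw).prop

theorem exists_hittingSet_card_le_fracBlockSens_mul_log (f : Finset (Fin n) → ℝ)
    (z : Finset (Fin n)) :
    ∃ H : Finset (Fin n), (∀ w, f (z ∪ w) ≠ f z → (H ∩ w).Nonempty) ∧
      #H ≤ fracBlockSens f * Real.log (sparsity f) + 1 := by
  classical
  set G : Finset (Finset (Fin n)) := {w | Minimal (fun w ↦ f (z ∪ w) ≠ f z) w}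
  have minimal_of_mem {w : Finset (Fin n)} (hw : w ∈ G) : Minimal (fun w ↦ f (z ∪ w) ≠ f z) w :=
    (mem_filter.mp hw).2
  obtain ⟨H, hHG, hH⟩ := exists_hittingSet_card_le (G := G) (K := fracBlockSens f)
    fun F hFG hF ↦ exists_card_le_fracBlockSens_mul hF fun w hw ↦ (minimal_of_mem (hFG hw)).prop
  refine ⟨H, fun w hw ↦ ?_, ?_⟩
  · obtain ⟨u, huw, hu⟩ := exists_minimal_le_of_wellFoundedLT (fun w ↦ f (z ∪ w) ≠ f z) w hw
    exact (not_disjoint_iff_nonempty_inter.mp (hHG u (by simpa [G] using hu))).mono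
      (inter_subset_inter_left huw)
  · have log_card_le : Real.log #G ≤ Real.log (sparsity f) := by
      have card_le := card_minimal_le_sparsity f z G fun w hw ↦ minimal_of_mem hw
      rcases Nat.eq_zero_or_pos #G with h | h
      · rw [h, Nat.cast_zero, Real.log_zero]
        exact Real.log_natCast_nonneg _
      · exact Real.log_le_log (by exact_mod_cast h) (by exact_mod_cast card_le)
    have := fracBlockSens_nonneg f
    exact hH.trans (by gcongr)

end GreedyHitting

section Conclusion

variable {n : ℕ} {f : Finset (Fin n) → ℝ} {S : Finset ℝ}

lemma one_le_logb_two {r : ℕ} (hr : 2 ≤ r) : 1 ≤ Real.logb 2 r := by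
  rw [Real.le_logb_iff_rpow_le one_lt_two (by positivity), Real.rpow_one]
  exact_mod_cast hr

lemma log_le_logb_two (r : ℕ) : Real.log r ≤ Real.logb 2 r :=
  le_div_self (Real.log_natCast_nonneg r) (Real.log_pos one_lt_two)
    (Real.log_two_lt_d9.le.trans (by norm_num))

lemma succ_pow_add_one_le_four_pow {r s d : ℕ} (hr : 2 ≤ r) (hd : s * Real.logb 2 r ≤ d) :
    (r + 1) ^ s + 1 ≤ 4 ^ (d + 1) := by
  have pow_le : (r : ℝ) ^ s ≤ 2 ^ d := by
    rw [← Real.rpow_natCast 2 d, ← Real.logb_le_iff_le_rpow one_lt_two (by positivity),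
      Real.logb_pow]
    exact hd
  have pow_le' : r ^ s ≤ 2 ^ d := by exact_mod_cast pow_le
  calc (r + 1) ^ s + 1 ≤ (r ^ 2) ^ s + 1 := by gcongr; nlinarith
    _ = (r ^ s) ^ 2 + 1 := by rw [pow_right_comm]
    _ ≤ (2 ^ d) ^ 2 + 1 := by gcongr
    _ = 4 ^ d + 1 := by rw [pow_right_comm]; norm_num
    _ ≤ 4 ^ (d + 1) := by rw [pow_succ]; linarith [Nat.one_le_pow d 4 (by norm_num)]

lemma fracBlockSens_le (hf : ∀ x, f x ∈ S) (hr : 2 ≤ sparsity f) :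
    fracBlockSens f ≤ 2 ^ 21 * (#S * Real.logb 2 (sparsity f)) ^ 4 := by
  set x := #S * Real.logb 2 (sparsity f)
  set d := ⌈x⌉₊
  have one_le_x : 1 ≤ x := one_le_mul_of_one_le_of_one_le
    (by exact_mod_cast card_pos.mpr ⟨f ∅, hf ∅⟩) (one_le_logb_two hr)
  have one_le_d : 1 ≤ d := Nat.one_le_ceil_iff.mpr (one_pos.trans_le one_le_x)
  have d_le : (d : ℝ) ≤ 2 * x := by linarith [Nat.ceil_lt_add_one (one_pos.le.trans one_le_x)]
  have blockSensLE : BlockSensLE f (32 * d ^ 2) :=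
    blockSensLE_of_sparsity_le hf one_le_d (succ_pow_add_one_le_four_pow hr (Nat.le_ceil x))
  calc fracBlockSens f ≤ 64 * ((32 * d ^ 2 : ℕ) + 1) ^ 2 := blockSensLE.fracBlockSens_lt.le
    _ ≤ 64 * (33 * d ^ 2) ^ 2 := by
        have one_le_sq : (1 : ℝ) ≤ d ^ 2 := by exact_mod_cast Nat.one_le_pow 2 d one_le_d
        push_cast
        gcongr
        linarith
    _ = 64 * 33 ^ 2 * (d : ℝ) ^ 4 := by ring
    _ ≤ 64 * 33 ^ 2 * (2 * x) ^ 4 := by gcongr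
    _ ≤ 2 ^ 21 * x ^ 4 := by
        rw [mul_pow, ← mul_assoc]
        gcongr
        norm_num

end Conclusion

end SparseCube

/-- For `f : {0,1}^n → S` with `|S| = s` and sparsity `r ≥ 2`, every `W(f,z)` has a
hitting set of size `≤ C·s⁴·(log₂ r)^5`, i.e. `HSC(f) = O(s⁴·(log r)^5)`. -/
theorem stmt3 :
    ∃ C : ℝ, 0 < C ∧
      ∀ (n s : ℕ) (S : Finset ℝ) (f : Finset (Fin n) → ℝ),
        S.card = s →
        (∀ x, f x ∈ S) →
        2 ≤ sparsity f →
        ∀ z : Finset (Fin n),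
          ∃ H : Finset (Fin n),
            (∀ w ∈ W f z, (H ∩ w).Nonempty) ∧
            (H.card : ℝ) ≤ C * (s : ℝ) ^ 4 * (Real.logb 2 (sparsity f)) ^ 5 := by
  refine ⟨2 ^ 22, by norm_num, ?_⟩
  rintro n _ S f rfl hf hr z
  obtain ⟨H, hitting, card_le⟩ := SparseCube.exists_hittingSet_card_le_fracBlockSens_mul_log f z
  refine ⟨H, fun w hw ↦ hitting w hw.2, card_le.trans ?_⟩
  set L := Real.logb 2 (sparsity f)
  have one_le_L : 1 ≤ L := SparseCube.one_le_logb_two hr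
  have one_le_card : (1 : ℝ) ≤ S.card := by
    exact_mod_cast Finset.card_pos.mpr ⟨f ∅, hf ∅⟩
  have one_le_bound : 1 ≤ (S.card : ℝ) ^ 4 * L ^ 5 :=
    one_le_mul_of_one_le_of_one_le (one_le_pow₀ one_le_card) (one_le_pow₀ one_le_L)
  calc SparseCube.fracBlockSens f * Real.log (sparsity f) + 1
      ≤ 2 ^ 21 * (S.card * L) ^ 4 * L + 1 := by
        gcongr
        · exact SparseCube.fracBlockSens_le hf hr
        · exact SparseCube.log_le_logb_two _
    _ ≤ 2 ^ 22 * (S.card : ℝ) ^ 4 * L ^ 5 := by linear_combination (2 ^ 21) * one_le_bound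
end

section
/- There is an absolute constant C > 0 such that the following holds. Let f : {0,1}^n → {0,1} be a boolean function with sparsity spar(f) = r ≥ 2. Then MBS(f) ≤ C·(log₂ r)²; that is, for every z ∈ {0,1}^n and every collection of pairwise disjoint sets w_1, …, w_k ⊆ [n]∖z with f(z ∨ w_i) ≠ f(z) for all i ∈ [k], one has k ≤ C·(log₂ r)². -/
/-!
Merging each block `w i` into a single variable, and fixing the variables of `z` to `1` and all
others to `0`, gives a boolean function `g` of `k` variables that has no more monomials than `f`
and whose value changes when any single variable is raised from the origin. A uniformly random set
of variables contains a fixed monomial of degree `> d` with probability at most `2⁻ᵈ⁻¹`, so for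
`d ≈ log₂ (sparsity g)` more than half of all sets `R` are such that `g` has degree at most `d` on
`R`; one of them has size at least `k / 2`. Averaging `g` over the subsets of `R` of each given size
produces a univariate polynomial of degree at most `d` that stays in `[0, 1]` on `{0, …, #R}` and
jumps by `1` between `0` and `1`. This forces `#R < 6 d²`, because the vanishing of a finite
difference of high order bounds a polynomial of low degree at `0` by its values at the points
`6, 6 · 2², …, 6 · d²`.
-/

open Finset
open scoped BigOperators

section FiniteDifference

open Polynomial

lemma sum_erase_range_eq_sum_Icc {M : Type*} [AddCommMonoid M] (φ : ℕ → M) (d : ℕ) :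
    ∑ j ∈ (range (2 * d + 1)).erase d, φ j = ∑ e ∈ Icc 1 d, (φ (d + e) + φ (d - e)) := by
  have hsplit : (range (2 * d + 1)).erase d =
      (Icc 1 d).image (d + ·) ∪ (Icc 1 d).image (d - ·) := by
    ext j
    simp only [mem_erase, mem_range, mem_union, mem_image, mem_Icc]
    constructor
    · rintro ⟨hne, hlt⟩
      rcases lt_or_gt_of_ne hne with h | h
      · exact Or.inr ⟨d - j, by omega, by omega⟩
      · exact Or.inl ⟨j - d, by omega, by omega⟩
    · rintro (⟨e, he, rfl⟩ | ⟨e, he, rfl⟩) <;> omega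
  have hdisj : Disjoint ((Icc 1 d).image (d + ·)) ((Icc 1 d).image (d - ·)) := by
    simp only [disjoint_left, mem_image, mem_Icc]
    rintro _ ⟨e, he, rfl⟩ ⟨e', he', h⟩
    omega
  rw [hsplit, sum_union hdisj, sum_image fun _ _ _ _ h => Nat.add_left_cancel h,
    sum_image fun a ha b hb (h : d - a = d - b) => ?_, sum_add_distrib]
  simp only [coe_Icc, Set.mem_Icc] at ha hb
  omega

/-- The central binomial coefficient is the largest weight in the vanishing difference of
order `2 * d` centred at `0`. -/
lemma abs_eval_zero_le_sum_abs_eval {H : ℝ[X]} {d : ℕ} (hH : H.natDegree < 2 * d) :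
    |H.eval 0| ≤ ∑ e ∈ Icc 1 d, (|H.eval (e : ℝ)| + |H.eval (-e : ℝ)|) := by
  let weighted (j : ℕ) : ℝ := (-1) ^ (2 * d - j) * (2 * d).choose j * H.eval (-d + j : ℝ)
  have habs (j : ℕ) : |weighted j| = (2 * d).choose j * |H.eval (-d + j : ℝ)| := by
    simp [weighted, abs_mul]
  have hdiff : ∑ j ∈ range (2 * d + 1), weighted j = 0 := by
    have h := congrFun (fwdDiff_iter_eq_zero_of_degree_lt hH) (-d : ℝ)
    rw [fwdDiff_iter_eq_sum_shift] at h
    simpa [weighted] using h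
  have hcentre : weighted d = -∑ j ∈ (range (2 * d + 1)).erase d, weighted j := by
    rw [← add_sum_erase _ _ (mem_range.2 (by omega : d < 2 * d + 1))] at hdiff
    exact eq_neg_of_add_eq_zero_left hdiff
  have hpos : (0 : ℝ) < d.centralBinom := mod_cast d.centralBinom_pos
  refine le_of_mul_le_mul_left ?_ hpos
  calc d.centralBinom * |H.eval 0| = |weighted d| := by simp [habs, Nat.centralBinom]
    _ ≤ ∑ j ∈ (range (2 * d + 1)).erase d, |weighted j| := by
      rw [hcentre, abs_neg]
      exact abs_sum_le_sum_abs _ _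
    _ ≤ ∑ j ∈ (range (2 * d + 1)).erase d, d.centralBinom * |H.eval (-d + j : ℝ)| := by
      refine sum_le_sum fun j _ => ?_
      rw [habs]
      gcongr
      exact Nat.choose_le_centralBinom j d
    _ = d.centralBinom * ∑ e ∈ Icc 1 d, (|H.eval (e : ℝ)| + |H.eval (-e : ℝ)|) := by
      rw [← mul_sum, sum_erase_range_eq_sum_Icc fun j : ℕ => |H.eval (-d + j : ℝ)|]
      congr 1
      refine sum_congr rfl fun e he => ?_
      rw [Nat.cast_add, Nat.cast_sub (mem_Icc.1 he).2]
      ring_nf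

lemma abs_eval_zero_le_two_mul_sum_abs_eval_mul_sq {h : ℝ[X]} {d : ℕ} (hd : h.natDegree < d)
    (a : ℝ) : |h.eval 0| ≤ 2 * ∑ e ∈ Icc 1 d, |h.eval (a * (e : ℝ) ^ 2)| := by
  have hdeg : (h.comp (C a * X ^ 2)).natDegree < 2 * d := by
    have hle := natDegree_comp_le (p := h) (q := C a * X ^ 2)
    have hmul := Nat.mul_le_mul_left h.natDegree (natDegree_C_mul_X_pow_le a 2)
    omega
  simpa [mul_sum, two_mul] using abs_eval_zero_le_sum_abs_eval hdeg

lemma abs_eval_zero_le_four_mul_of_abs_eval_mul_sq_le {h : ℝ[X]} {d : ℕ} {a b : ℝ}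
    (hd : h.natDegree < d)
    (hb : ∀ e ∈ Icc 1 d, |h.eval (a * (e : ℝ) ^ 2)| ≤ b / (e : ℝ) ^ 2) : |h.eval 0| ≤ 4 * b := by
  have hb0 : 0 ≤ b := by
    simpa using (abs_nonneg _).trans (hb 1 (mem_Icc.2 ⟨le_rfl, Nat.one_le_of_lt hd⟩))
  have hsum : ∑ e ∈ Icc 1 d, ((e : ℝ) ^ 2)⁻¹ ≤ 2 := by
    have hIoo : Ioo 0 (d + 1) = Icc 1 d := by
      ext e
      simp only [mem_Ioo, mem_Icc]
      omega
    simpa [hIoo] using sum_Ioo_inv_sq_le (α := ℝ) 0 (d + 1)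
  calc |h.eval 0| ≤ 2 * ∑ e ∈ Icc 1 d, |h.eval (a * (e : ℝ) ^ 2)| :=
      abs_eval_zero_le_two_mul_sum_abs_eval_mul_sq hd a
    _ ≤ 2 * ∑ e ∈ Icc 1 d, b / (e : ℝ) ^ 2 := by
      gcongr with e he
      exact hb e he
    _ = 2 * (b * ∑ e ∈ Icc 1 d, ((e : ℝ) ^ 2)⁻¹) := by simp only [mul_sum, div_eq_mul_inv]
    _ ≤ 2 * (b * 2) := by gcongr
    _ = 4 * b := by ring

/-- The quotient `Q` of `P - P(1)` by `X - 1` has absolute value `δ = |P(0) - P(1)|` at `0`, and at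
most `δ / (6 e² - 1) ≤ δ / (5 e²)` at `6 e²`. Here `6` is the least integer for which the resulting
bound `|Q(0)| ≤ 4 / 5 * δ` is a contradiction. -/
lemma lt_six_mul_sq_of_abs_eval_sub_le {P : ℝ[X]} {d m : ℕ} (hP : P.natDegree ≤ d)
    (hne : P.eval 0 ≠ P.eval 1)
    (hbound : ∀ t : ℕ, t ≤ m → |P.eval (t : ℝ) - P.eval 1| ≤ |P.eval 0 - P.eval 1|) :
    m < 6 * d ^ 2 := by
  by_contra! hm
  set δ := |P.eval 0 - P.eval 1|
  have hδ : 0 < δ := abs_pos.2 (sub_ne_zero.2 hne)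
  set Q := P /ₘ (X - C 1)
  have heval (x : ℝ) : P.eval x - P.eval 1 = (x - 1) * Q.eval x := by
    have h := congrArg (eval x) (modByMonic_add_div P (X - C 1))
    rw [modByMonic_X_sub_C_eq_C_eval] at h
    simp only [eval_add, eval_mul, eval_sub, eval_X, eval_C] at h
    linarith
  have hQdeg : Q.natDegree < d := by
    have hP0 : P.natDegree ≠ 0 := fun h => hne (by
      rw [eq_C_of_natDegree_eq_zero h, eval_C, eval_C])
    rw [natDegree_divByMonic P (monic_X_sub_C 1), natDegree_X_sub_C]
    omega
  have hQ0 : |Q.eval 0| = δ := by simp [δ, heval]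
  have hQsq : ∀ e ∈ Icc 1 d, |Q.eval (6 * (e : ℝ) ^ 2)| ≤ δ / 5 / (e : ℝ) ^ 2 := by
    intro e he
    obtain ⟨he1, hed⟩ := mem_Icc.1 he
    have hesq : (1 : ℝ) ≤ (e : ℝ) ^ 2 := mod_cast Nat.one_le_pow 2 e he1
    have hb := hbound (6 * e ^ 2) (le_trans (by gcongr) hm)
    push_cast at hb
    rw [heval, abs_mul, abs_of_nonneg (by linarith)] at hb
    rw [le_div_iff₀ (by positivity), le_div_iff₀ (by norm_num)]
    nlinarith [abs_nonneg (Q.eval (6 * (e : ℝ) ^ 2))]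
  have hle := abs_eval_zero_le_four_mul_of_abs_eval_mul_sq_le hQdeg hQsq
  linarith

end FiniteDifference

section Symmetrization

open Polynomial

variable {α : Type*}

lemma expect_powersetCard_ite_subset [DecidableEq α] {R s : Finset α} (hs : s ⊆ R) {t : ℕ}
    (ht : t ≤ #R) :
    𝔼 S ∈ R.powersetCard t, (if s ⊆ S then (1 : ℝ) else 0) =
      t.descFactorial #s / (#R).descFactorial #s := by
  rw [expect_eq_sum_div_card, sum_boole, card_powersetCard]
  have hRt : ((#R).choose t : ℝ) ≠ 0 := mod_cast (Nat.choose_pos ht).ne'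
  have hRs : ((#R).choose #s : ℝ) ≠ 0 := mod_cast (Nat.choose_pos (card_le_card hs)).ne'
  have hfac : ((#s).factorial : ℝ) ≠ 0 := mod_cast (#s).factorial_ne_zero
  simp only [Nat.descFactorial_eq_factorial_mul_choose, Nat.cast_mul]
  rw [mul_div_mul_left _ _ hfac, div_eq_div_iff hRt hRs]
  rcases le_or_gt #s t with hst | hts
  · rw [card_filter_powersetCard_subset s R t hs hst]
    exact_mod_cast (by rw [mul_comm, ← Nat.choose_mul hst, mul_comm] :
      (#R - #s).choose (t - #s) * (#R).choose #s = t.choose #s * (#R).choose t)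
  · have hempty : {S ∈ R.powersetCard t | s ⊆ S} = ∅ :=
      filter_eq_empty_iff.2 fun S hS hsS =>
        (card_le_card hsS).not_gt ((mem_powersetCard.1 hS).2 ▸ hts)
    simp [hempty, Nat.choose_eq_zero_of_lt hts]

/-- The Minsky–Papert symmetrization over `R` of the multilinear polynomial with coefficients `c`:
the univariate polynomial whose value at `t ≤ #R` is the average of `∑ s ⊆ S, c s` over the subsets
`S` of `R` of size `t`. -/
noncomputable def symmetrization (c : Finset α → ℝ) (R : Finset α) : ℝ[X] :=
  ∑ s ∈ R.powerset, C (c s / (#R).descFactorial #s) * descPochhammer ℝ #s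

lemma natDegree_symmetrization_le {c : Finset α → ℝ} {R : Finset α} {d : ℕ}
    (hdeg : ∀ s ⊆ R, c s ≠ 0 → #s ≤ d) : (symmetrization c R).natDegree ≤ d := by
  refine natDegree_sum_le_of_forall_le _ _ fun s hs => ?_
  by_cases hcs : c s = 0
  · simp [hcs]
  · exact (natDegree_C_mul_le _ _).trans
      ((descPochhammer_natDegree ℝ #s).trans_le (hdeg s (mem_powerset.1 hs) hcs))

lemma eval_symmetrization {g c : Finset α → ℝ} {R : Finset α}
    (hg : ∀ S ⊆ R, g S = ∑ s ∈ S.powerset, c s) {t : ℕ} (ht : t ≤ #R) :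
    (symmetrization c R).eval (t : ℝ) = 𝔼 S ∈ R.powersetCard t, g S := by
  classical
  have hextend : ∀ S ∈ R.powersetCard t,
      g S = ∑ s ∈ R.powerset, c s * if s ⊆ S then 1 else 0 := by
    intro S hS
    have hSR : S ⊆ R := (mem_powersetCard.1 hS).1
    simp only [hg S hSR, mul_ite, mul_one, mul_zero, ← mem_powerset, sum_ite_mem,
      inter_eq_right.2 (powerset_mono.2 hSR)]
  rw [expect_congr rfl hextend, expect_sum_comm, symmetrization, eval_finsetSum]
  refine sum_congr rfl fun s hs => ?_
  rw [← mul_expect, expect_powersetCard_ite_subset (mem_powerset.1 hs) ht, eval_mul, eval_C,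
    descPochhammer_eval_eq_descFactorial]
  ring

lemma card_le_six_mul_sq_of_degree_le {g c : Finset α → ℝ} {R : Finset α} {d : ℕ}
    (hg : ∀ S ⊆ R, g S = ∑ s ∈ S.powerset, c s) (hbool : ∀ S ⊆ R, g S = 0 ∨ g S = 1)
    (hsens : ∀ i ∈ R, g {i} ≠ g ∅) (hdeg : ∀ s ⊆ R, c s ≠ 0 → #s ≤ d) :
    #R ≤ 6 * d ^ 2 := by
  rcases R.eq_empty_or_nonempty with rfl | hR
  · simp
  have hempty := hbool ∅ (empty_subset R)
  have heval0 : (symmetrization c R).eval 0 = g ∅ := by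
    simpa using eval_symmetrization hg (Nat.zero_le _)
  have heval1 : (symmetrization c R).eval 1 = 1 - g ∅ := by
    have hflip : ∀ S ∈ R.powersetCard 1, g S = 1 - g ∅ := by
      intro S hS
      obtain ⟨hSR, hcard⟩ := mem_powersetCard.1 hS
      obtain ⟨i, rfl⟩ := card_eq_one.1 hcard
      have := hsens i (singleton_subset_iff.1 hSR)
      rcases hbool {i} hSR with h | h <;> rcases hempty with h' | h' <;> simp_all
    have h := eval_symmetrization hg hR.card_pos
    rwa [expect_congr rfl hflip, expect_const (powersetCard_nonempty.2 hR.card_pos),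
      Nat.cast_one] at h
  have hIcc : ∀ S ⊆ R, g S ∈ Set.Icc 0 1 := fun S hS => by
    rcases hbool S hS with h | h <;> simp [h]
  have hjump : |g ∅ - (1 - g ∅)| = 1 := by rcases hempty with h | h <;> simp [h]
  refine (lt_six_mul_sq_of_abs_eval_sub_le (natDegree_symmetrization_le hdeg) ?_ ?_).le
  · rw [heval0, heval1, ← sub_ne_zero, ← abs_pos, hjump]
    exact one_pos
  · intro t ht
    have hne : (R.powersetCard t).Nonempty := powersetCard_nonempty.2 ht
    have hnonneg := le_expect hne fun S hS => (hIcc S (mem_powersetCard.1 hS).1).1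
    have hle_one := expect_le hne fun S hS => (hIcc S (mem_powersetCard.1 hS).1).2
    obtain ⟨hempty_nonneg, hempty_le_one⟩ := hIcc ∅ (empty_subset R)
    rw [heval0, heval1, hjump, eval_symmetrization hg ht]
    exact abs_le.2 ⟨by linarith, by linarith⟩

end Symmetrization

section RandomRestriction

variable {ι : Type*} [Fintype ι]

lemma card_filter_exists_subset_mul_two_pow_le [DecidableEq ι] {𝒜 : Finset (Finset ι)} {d : ℕ}
    (h𝒜 : ∀ s ∈ 𝒜, d ≤ #s) :
    #{R : Finset ι | ∃ s ∈ 𝒜, s ⊆ R} * 2 ^ d ≤ #𝒜 * 2 ^ Fintype.card ι := by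
  have hcover : ({R : Finset ι | ∃ s ∈ 𝒜, s ⊆ R} : Finset (Finset ι)) =
      𝒜.biUnion fun s => Icc s univ := by
    ext R; simp
  calc #{R : Finset ι | ∃ s ∈ 𝒜, s ⊆ R} * 2 ^ d
      ≤ (∑ s ∈ 𝒜, #(Icc s univ)) * 2 ^ d := by rw [hcover]; gcongr; exact card_biUnion_le
    _ = ∑ s ∈ 𝒜, 2 ^ (Fintype.card ι - #s + d) := by
      simp_rw [sum_mul, card_Icc_finset (subset_univ _), card_univ, pow_add]
    _ ≤ ∑ _s ∈ 𝒜, 2 ^ Fintype.card ι := by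
      refine sum_le_sum fun s hs => Nat.pow_le_pow_right two_pos ?_
      have := h𝒜 s hs
      have := card_le_univ s
      omega
    _ = #𝒜 * 2 ^ Fintype.card ι := by rw [sum_const, smul_eq_mul]

/-- Fewer than half of all sets contain a large member of `𝒜`, so some set and its complement both
avoid this; the larger of the two has at least half of the elements. -/
lemma exists_card_le_two_mul_card_of_card_lt_two_pow {𝒜 : Finset (Finset ι)} {d : ℕ}
    (h𝒜 : #𝒜 < 2 ^ d) :
    ∃ R : Finset ι, Fintype.card ι ≤ 2 * #R ∧ ∀ s ∈ 𝒜, s ⊆ R → #s ≤ d := by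
  classical
  set bad : Finset (Finset ι) := {R | ∃ s ∈ {s ∈ 𝒜 | d + 1 ≤ #s}, s ⊆ R}
  have hbad : 2 * #bad < 2 ^ Fintype.card ι := by
    refine lt_of_mul_lt_mul_right ?_ (Nat.zero_le (2 ^ d))
    calc 2 * #bad * 2 ^ d = #bad * 2 ^ (d + 1) := by ring
      _ ≤ #{s ∈ 𝒜 | d + 1 ≤ #s} * 2 ^ Fintype.card ι :=
        card_filter_exists_subset_mul_two_pow_le fun s hs => (mem_filter.1 hs).2
      _ ≤ #𝒜 * 2 ^ Fintype.card ι := by gcongr; exact filter_subset _ _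
      _ < 2 ^ d * 2 ^ Fintype.card ι := by gcongr
      _ = 2 ^ Fintype.card ι * 2 ^ d := mul_comm _ _
  obtain ⟨R, hR⟩ : ∃ R, R ∉ bad ∪ bad.image compl := by
    by_contra! hall
    have hcard := card_le_card fun R (_ : R ∈ univ) => hall R
    rw [card_univ, Fintype.card_finset] at hcard
    have := card_union_le bad (bad.image compl)
    have : #(bad.image compl) ≤ #bad := card_image_le
    omega
  have hgood {R : Finset ι} (hR : R ∉ bad) : ∀ s ∈ 𝒜, s ⊆ R → #s ≤ d := by
    intro s hs hsR
    by_contra! hlt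
    exact hR (mem_filter.2 ⟨mem_univ R, s, mem_filter.2 ⟨hs, hlt⟩, hsR⟩)
  have hRbad : R ∉ bad := fun h => hR (mem_union_left _ h)
  have hRcbad : Rᶜ ∉ bad := fun h =>
    hR (mem_union_right _ (mem_image.2 ⟨Rᶜ, h, compl_compl R⟩))
  have hadd := card_add_card_compl R
  rcases le_total #R #Rᶜ with hle | hle
  · exact ⟨Rᶜ, by omega, hgood hRcbad⟩
  · exact ⟨R, by omega, hgood hRbad⟩

end RandomRestriction

section Blocks

variable {α ι : Type*} [DecidableEq α]

/-- The function of one variable per block obtained from `f` by setting the variables in `z` to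
`1`, all variables of a block `w i` to the `i`-th new variable, and the remaining ones to `0`. -/
def mergeBlocks (f : Finset α → ℝ) (z : Finset α) (w : ι → Finset α) (T : Finset ι) : ℝ :=
  f (z ∪ T.biUnion w)

/-- The blocks that meet `s`. This is the monomial into which `mergeBlocks` turns the monomial `s`,
provided `s` uses only variables of `z` and of the blocks. -/
def blocksMeeting [Fintype ι] (w : ι → Finset α) (s : Finset α) : Finset ι :=
  {i | ¬Disjoint s (w i)}

lemma subset_union_biUnion_iff_blocksMeeting_subset [Fintype ι] {z : Finset α} {w : ι → Finset α}
    (hz : ∀ i, Disjoint z (w i)) (hw : Pairwise (Function.onFun Disjoint w))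
    {s : Finset α} {T : Finset ι} :
    s ⊆ z ∪ T.biUnion w ↔ s ⊆ z ∪ univ.biUnion w ∧ blocksMeeting w s ⊆ T := by
  constructor
  · refine fun hs => ⟨hs.trans (union_subset_union_right
      (biUnion_subset_biUnion_of_subset_left w (subset_univ T))), fun i hi => ?_⟩
    obtain ⟨x, hxs, hxi⟩ := not_disjoint_iff.1 (mem_filter.1 hi).2
    have hxT := (mem_union.1 (hs hxs)).resolve_left (disjoint_right.1 (hz i) hxi)
    obtain ⟨j, hjT, hxj⟩ := mem_biUnion.1 hxT
    have hij : i = j := hw.eq (not_disjoint_iff.2 ⟨x, hxi, hxj⟩)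
    exact hij ▸ hjT
  · rintro ⟨hs, hT⟩ x hx
    refine mem_union.2 ((mem_union.1 (hs hx)).imp_right fun hxw => ?_)
    obtain ⟨j, -, hxj⟩ := mem_biUnion.1 hxw
    have hj : j ∈ blocksMeeting w s := mem_filter.2 ⟨mem_univ j, not_disjoint_iff.2 ⟨x, hx, hxj⟩⟩
    exact mem_biUnion.2 ⟨j, hT hj, hxj⟩

end Blocks

section Coefficients

lemma sum_Icc_neg_one_pow_card_sub {α A : Type*} [DecidableEq α] [Ring A] {t x : Finset α}
    (h : t ⊆ x) : ∑ s ∈ Icc t x, (-1 : A) ^ (#s - #t) = if t = x then 1 else 0 := by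
  have hinj : Set.InjOn (t ∪ ·) ((x \ t).powerset : Set (Finset α)) := fun a ha b hb hab => by
    have hta := disjoint_sdiff.mono_right (mem_powerset.1 ha)
    have htb := disjoint_sdiff.mono_right (mem_powerset.1 hb)
    rw [← union_sdiff_cancel_left hta, ← union_sdiff_cancel_left htb]
    exact congrArg (· \ t) hab
  rw [Icc_eq_image_powerset h, sum_image hinj]
  calc ∑ u ∈ (x \ t).powerset, (-1 : A) ^ (#(t ∪ u) - #t)
      = ((∑ u ∈ (x \ t).powerset, (-1) ^ #u : ℤ) : A) := by
        push_cast
        refine sum_congr rfl fun u hu => ?_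
        rw [card_union_of_disjoint (disjoint_sdiff.mono_right (mem_powerset.1 hu)),
          Nat.add_sub_cancel_left]
    _ = if t = x then 1 else 0 := by
        have hiff : x \ t = ∅ ↔ t = x :=
          sdiff_eq_empty_iff_subset.trans ⟨h.antisymm, fun h => h.ge⟩
        simp [sum_powerset_neg_one_pow_card, hiff]

variable {n k : ℕ}

lemma sum_powerset_coeff (f : Finset (Fin n) → ℝ) (x : Finset (Fin n)) :
    ∑ s ∈ x.powerset, coeff f s = f x := by
  calc ∑ s ∈ x.powerset, coeff f s
      = ∑ t ∈ x.powerset, ∑ s ∈ Icc t x, (-1 : ℝ) ^ (#s - #t) * f t :=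
        sum_comm' fun s t => by
          simp only [mem_powerset, mem_Icc]
          exact ⟨fun ⟨hs, ht⟩ => ⟨⟨ht, hs⟩, ht.trans hs⟩, fun ⟨⟨ht, hs⟩, _⟩ => ⟨hs, ht⟩⟩
    _ = ∑ t ∈ x.powerset, (if t = x then 1 else 0) * f t :=
        sum_congr rfl fun t ht => by
          rw [← sum_mul, sum_Icc_neg_one_pow_card_sub (mem_powerset.1 ht)]
    _ = f x := by simp

lemma coeff_eq_of_forall_eq_sum_powerset {f c : Finset (Fin n) → ℝ}
    (hf : ∀ x, f x = ∑ s ∈ x.powerset, c s) (s : Finset (Fin n)) : coeff f s = c s := by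
  induction s using Finset.strongInduction with
  | H s ih =>
    have hsum : ∑ t ∈ s.powerset, coeff f t = ∑ t ∈ s.powerset, c t :=
      (sum_powerset_coeff f s).trans (hf s)
    have hssub : ∑ t ∈ s.ssubsets, coeff f t = ∑ t ∈ s.ssubsets, c t :=
      sum_congr rfl fun t ht => ih t (mem_ssubsets.1 ht)
    rw [← add_sum_erase _ _ (mem_powerset_self s), ← add_sum_erase _ c (mem_powerset_self s)]
      at hsum
    rw [ssubsets] at hssub
    linarith

lemma sparsity_eq_card_filter (f : Finset (Fin n) → ℝ) [DecidablePred fun s => coeff f s ≠ 0] :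
    sparsity f = #{s | coeff f s ≠ 0} := by
  rw [sparsity, ← Set.ncard_coe_finset, coe_filter_univ]

lemma coeff_mergeBlocks (f : Finset (Fin n) → ℝ) {z : Finset (Fin n)}
    {w : Fin k → Finset (Fin n)} (hz : ∀ i, Disjoint z (w i))
    (hw : Pairwise (Function.onFun Disjoint w)) (u : Finset (Fin k)) :
    coeff (mergeBlocks f z w) u =
      ∑ s ∈ (z ∪ univ.biUnion w).powerset with blocksMeeting w s = u, coeff f s := by
  refine coeff_eq_of_forall_eq_sum_powerset
    (c := fun u => ∑ s ∈ (z ∪ univ.biUnion w).powerset with blocksMeeting w s = u, coeff f s)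
    (fun T => ?_) u
  rw [sum_fiberwise_eq_sum_filter, mergeBlocks, ← sum_powerset_coeff f]
  refine sum_congr ?_ fun _ _ => rfl
  ext s
  simp only [mem_filter, mem_powerset, subset_union_biUnion_iff_blocksMeeting_subset hz hw (T := T)]

lemma sparsity_mergeBlocks_le (f : Finset (Fin n) → ℝ) {z : Finset (Fin n)}
    {w : Fin k → Finset (Fin n)} (hz : ∀ i, Disjoint z (w i))
    (hw : Pairwise (Function.onFun Disjoint w)) :
    sparsity (mergeBlocks f z w) ≤ sparsity f := by
  have hsub : {u | coeff (mergeBlocks f z w) u ≠ 0} ⊆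
      blocksMeeting w '' {s | coeff f s ≠ 0} := by
    intro u hu
    rw [Set.mem_ofPred_eq, coeff_mergeBlocks f hz hw] at hu
    obtain ⟨s, hs, hcoeff⟩ := exists_ne_zero_of_sum_ne_zero hu
    exact ⟨s, hcoeff, (mem_filter.1 hs).2⟩
  exact (Set.ncard_le_ncard hsub).trans (Set.ncard_image_le (Set.toFinite _))

lemma card_le_of_apply_singleton_ne {g : Finset (Fin k) → ℝ} (hbool : ∀ T, g T = 0 ∨ g T = 1)
    (hsens : ∀ i, g {i} ≠ g ∅) : k ≤ 12 * (Nat.log 2 (sparsity g) + 1) ^ 2 := by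
  classical
  have hspar : #{s | coeff g s ≠ 0} < 2 ^ (Nat.log 2 (sparsity g) + 1) :=
    sparsity_eq_card_filter g ▸ Nat.lt_pow_succ_log_self one_lt_two _
  obtain ⟨R, hkR, hdeg⟩ := exists_card_le_two_mul_card_of_card_lt_two_pow hspar
  have hR : #R ≤ 6 * (Nat.log 2 (sparsity g) + 1) ^ 2 :=
    card_le_six_mul_sq_of_degree_le (fun S _ => (sum_powerset_coeff g S).symm)
      (fun S _ => hbool S) (fun i _ => hsens i)
      (fun s hsR hs => hdeg s (mem_filter.2 ⟨mem_univ s, hs⟩) hsR)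
  rw [Fintype.card_fin] at hkR
  omega

end Coefficients

lemma natLog_add_one_le_two_mul_logb {r : ℕ} (hr : 2 ≤ r) :
    (Nat.log 2 r + 1 : ℝ) ≤ 2 * Real.logb 2 r := by
  have hfloor : (Nat.log 2 r : ℝ) ≤ Real.logb 2 r := mod_cast Real.natLog_le_logb r 2
  have hone : (1 : ℝ) ≤ Nat.log 2 r := mod_cast Nat.log_pos one_lt_two hr
  linarith

/-- `MBS(f) = O((log₂ spar f)²)` for boolean functions: any pairwise disjoint collection
`w_1, …, w_k ⊆ [n]∖z` with `f(z ∨ w_i) ≠ f(z)` has `k ≤ C·(log₂ r)²`. -/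
theorem stmt5 :
    ∃ C : ℝ, 0 < C ∧
      ∀ (n : ℕ) (f : Finset (Fin n) → ℝ),
        (∀ x, f x = 0 ∨ f x = 1) →
        2 ≤ sparsity f →
        ∀ (z : Finset (Fin n)) (k : ℕ) (w : Fin k → Finset (Fin n)),
          (∀ i, w i ∈ W f z) →
          (∀ i j, i ≠ j → Disjoint (w i) (w j)) →
          (k : ℝ) ≤ C * (Real.logb 2 (sparsity f)) ^ 2 := by
  refine ⟨48, by norm_num, fun n f hf hr z k w hw hdisj => ?_⟩
  have hk : k ≤ 12 * (Nat.log 2 (sparsity (mergeBlocks f z w)) + 1) ^ 2 :=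
    card_le_of_apply_singleton_ne (fun T => hf _) fun i => by
      simpa [mergeBlocks] using (hw i).2
  have hspar : sparsity (mergeBlocks f z w) ≤ sparsity f :=
    sparsity_mergeBlocks_le f (fun i => subset_compl_iff_disjoint_left.1 (hw i).1)
      fun i j hij => hdisj i j hij
  have hlog := natLog_add_one_le_two_mul_logb hr
  calc (k : ℝ) ≤ 12 * (Nat.log 2 (sparsity (mergeBlocks f z w)) + 1) ^ 2 := mod_cast hk
    _ ≤ 12 * (Nat.log 2 (sparsity f) + 1) ^ 2 := by gcongr
    _ ≤ 12 * (2 * Real.logb 2 (sparsity f)) ^ 2 := by gcongr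
    _ = 48 * Real.logb 2 (sparsity f) ^ 2 := by ring
end

section
/- There is an absolute constant c > 0 such that the following holds. Let f : {0,1}^n → ℝ, let z ∈ {0,1}^n, let p ∈ (0,1], and suppose there exists a p-smooth probability distribution D supported on W(f,z) = {w ⊆ [n]∖z : f(z ∨ w) ≠ f(z)}. Then MBS(f) ≥ c/√p. Equivalently, FMBS(f) = O(MBS(f)²). -/
/-!
Halving `p` while possible, we may assume that there is a `p`-smooth distribution `D` on `W(f,z)`
but no `p/2`-smooth distribution on any `W(f,z')`. Draw `k ≈ 1/(3√p)` independent samples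
`w_i ∼ D` and let `U` be the set of points covered at least twice, so that `Pr[x ∈ U] ≤ (kp)²`
for every `x`. If `f (z ∨ U) ≠ f z` held with probability `δ`, then the law of `U ∖ z` conditioned
on this event would be a `(kp)²/δ`-smooth distribution on `W(f,z)`; hence `δ ≤ 2k²p ≤ 1/3`.
Outside `w_i`, the set `U` depends only on the other samples, so the same argument at `z ∨ w_i`
bounds the probability that `f (z ∨ w_i ∨ U) ≠ f (z ∨ w_i)`. By averaging there are samples for
which `f (z ∨ U) = f z` and `f (z ∨ w_i ∨ U) = f (z ∨ w_i)` for at least `k/2` indices `i`; for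
these indices the sets `w_i ∖ (z ∨ U)` are pairwise disjoint and lie in `W(f, z ∨ U)`.
-/

section

open Finset

section ProductWeights

variable {ι κ R : Type*} [Fintype ι] [DecidableEq ι] [Fintype κ]

lemma sum_prod_filter_forall_mem [CommSemiring R] [DecidableEq κ] {D : κ → R}
    (hD : ∑ a, D a = 1) (T : Finset ι) (S : Finset κ) :
    ∑ ω : ι → κ with ∀ j ∈ T, ω j ∈ S, ∏ j, D (ω j) = (∑ a ∈ S, D a) ^ #T := by
  have event_eq : ({ω : ι → κ | ∀ j ∈ T, ω j ∈ S} : Finset (ι → κ)) =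
      Fintype.piFinset fun j => if j ∈ T then S else univ := by
    ext ω
    simp only [mem_filter, mem_univ, true_and, Fintype.mem_piFinset]
    refine forall_congr' fun j => ?_
    by_cases hj : j ∈ T <;> simp [hj]
  calc ∑ ω : ι → κ with ∀ j ∈ T, ω j ∈ S, ∏ j, D (ω j)
      = ∏ j, ∑ a ∈ if j ∈ T then S else univ, D a := by rw [event_eq, ← prod_univ_sum]
    _ = ∏ j, if j ∈ T then ∑ a ∈ S, D a else 1 :=
        prod_congr rfl fun j _ => by split_ifs <;> simp [hD]
    _ = (∑ a ∈ S, D a) ^ #T := by simp [prod_ite_mem]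

lemma sum_prod_eq_one [CommSemiring R] {D : κ → R} (hD : ∑ a, D a = 1) :
    ∑ ω : ι → κ, ∏ j, D (ω j) = 1 := by
  classical simpa using sum_prod_filter_forall_mem hD (∅ : Finset ι) ∅

lemma sum_prod_filter_split [CommSemiring R] (D : κ → R) (i : ι)
    (E : κ → ({j // j ≠ i} → κ) → Prop) [∀ a ω, Decidable (E a ω)] :
    ∑ ω : ι → κ with E (ω i) (fun j => ω j), ∏ j, D (ω j) =
      ∑ a, D a * ∑ ω with E a ω, ∏ j, D (ω j) := by
  simp only [sum_filter, mul_sum, mul_ite, mul_zero]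
  rw [← Fintype.sum_prod_type' fun a ω => if E a ω then D a * ∏ j, D (ω j) else 0]
  refine Fintype.sum_equiv (Equiv.funSplitAt i κ) _ _ fun ω => ?_
  rw [Fintype.prod_eq_mul_prod_subtype_ne _ i]
  rfl

end ProductWeights

lemma exists_notMem_card_le_two_mul_card_notMem {Ω ι : Type*} [Fintype Ω] [Fintype ι]
    [DecidableEq Ω] {P : Ω → ℝ} (hP : ∀ ω, 0 ≤ P ω) (hP_sum : ∑ ω, P ω = 1)
    {A : Finset Ω} (hA : ∑ ω ∈ A, P ω ≤ 1 / 3)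
    {B : ι → Finset Ω} (hB : ∀ i, ∑ ω ∈ B i, P ω ≤ 1 / 3) :
    ∃ ω, P ω ≠ 0 ∧ ω ∉ A ∧ Fintype.card ι ≤ 2 * #{i | ω ∉ B i} := by
  set G : Finset Ω := {ω ∈ Aᶜ | P ω ≠ 0}
  have hG : 2 / 3 ≤ ∑ ω ∈ G, P ω := by
    have := sum_add_sum_compl A P
    rw [sum_filter_ne_zero]
    linarith
  have G_nonempty : G.Nonempty := nonempty_of_sum_ne_zero (f := P) (by linarith)
  have expectation_le : ∑ ω ∈ G, P ω * #{i | ω ∈ B i} ≤ ∑ ω ∈ G, P ω * (Fintype.card ι / 2) :=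
    calc ∑ ω ∈ G, P ω * #{i | ω ∈ B i}
        ≤ ∑ ω, P ω * #{i | ω ∈ B i} :=
          sum_le_univ_sum_of_nonneg fun ω => mul_nonneg (hP ω) (Nat.cast_nonneg _)
      _ = ∑ i, ∑ ω ∈ B i, P ω := by
          simp only [card_filter, Nat.cast_sum, Nat.cast_ite, Nat.cast_one, Nat.cast_zero,
            mul_sum, mul_ite, mul_one, mul_zero]
          rw [sum_comm]
          simp only [sum_ite_mem, univ_inter]
      _ ≤ ∑ _i : ι, 1 / 3 := sum_le_sum fun i _ => hB i
      _ = 2 / 3 * (Fintype.card ι / 2 : ℝ) := by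
          rw [sum_const, card_univ, nsmul_eq_mul]
          ring
      _ ≤ ∑ ω ∈ G, P ω * (Fintype.card ι / 2) := by
          rw [← sum_mul]
          gcongr
  obtain ⟨ω, hω, hω_le⟩ := exists_le_of_sum_le G_nonempty expectation_le
  obtain ⟨hωA, hPω⟩ : ω ∉ A ∧ P ω ≠ 0 := by simpa [G] using hω
  refine ⟨ω, hPω, hωA, ?_⟩
  have few_bad : (#{i | ω ∈ B i} : ℝ) ≤ Fintype.card ι / 2 :=
    le_of_mul_le_mul_left hω_le ((hP ω).lt_of_ne' hPω)
  have few_bad' : 2 * #{i | ω ∈ B i} ≤ Fintype.card ι := by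
    rify
    linarith
  have := card_filter_add_card_filter_not (s := univ) fun i => ω ∈ B i
  rw [card_univ] at this
  omega

section SmoothDistributions

variable {α : Type*} [Fintype α] [DecidableEq α]

/-- `D` is a `p`-smooth probability distribution on the subsets of `α`, given by its weights. -/
structure IsSmoothDist (D : Finset α → ℝ) (p : ℝ) : Prop where
  nonneg : ∀ w, 0 ≤ D w
  sum_eq_one : ∑ w, D w = 1
  marginal_le : ∀ x, ∑ w with x ∈ w, D w ≤ p

/-- The set family `F` supports a `p`-smooth distribution. For `0 < p` this says that the fractional
matching number of the hypergraph `F` is at least `1 / p`. -/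
def HasSmoothDist (F : Set (Finset α)) (p : ℝ) : Prop :=
  ∃ D, IsSmoothDist D p ∧ ∀ w, D w ≠ 0 → w ∈ F

variable {F : Set (Finset α)} {p : ℝ}

lemma HasSmoothDist.nonempty (h : HasSmoothDist F p) : F.Nonempty := by
  obtain ⟨D, hD, hDF⟩ := h
  obtain ⟨w, -, hw⟩ := exists_ne_zero_of_sum_ne_zero (hD.sum_eq_one ▸ one_ne_zero)
  exact ⟨w, hDF w hw⟩

lemma HasSmoothDist.one_le_card_mul (h : HasSmoothDist F p) (hF : ∅ ∉ F) :
    1 ≤ Fintype.card α * p := by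
  obtain ⟨D, hD, hDF⟩ := h
  have le_card_mul : ∀ w, D w ≤ #w * D w := fun w => by
    by_cases hw : D w = 0
    · simp [hw]
    have w_nonempty : w.Nonempty := nonempty_iff_ne_empty.2 fun h => hF (h ▸ hDF w hw)
    exact le_mul_of_one_le_left (hD.nonneg w) (mod_cast w_nonempty.card_pos)
  calc (1 : ℝ) = ∑ w, D w := hD.sum_eq_one.symm
    _ ≤ ∑ w, #w * D w := sum_le_sum fun w _ => le_card_mul w
    _ = ∑ x, ∑ w with x ∈ w, D w := by
        simp only [sum_filter]
        rw [sum_comm]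
        simp [sum_ite_mem]
    _ ≤ ∑ _x : α, p := sum_le_sum fun x _ => hD.marginal_le x
    _ = Fintype.card α * p := by simp

lemma hasSmoothDist_of_conditional_law {Ω : Type*} {P : Ω → ℝ} (hP : ∀ ω, 0 ≤ P ω)
    {E : Finset Ω} (hE : 0 < ∑ ω ∈ E, P ω) {v : Ω → Finset α} (hv : ∀ ω ∈ E, v ω ∈ F)
    (hp : ∀ x, ∑ ω ∈ E with x ∈ v ω, P ω ≤ p * ∑ ω ∈ E, P ω) : HasSmoothDist F p := by
  refine ⟨fun w => (∑ ω ∈ E with v ω = w, P ω) / ∑ ω ∈ E, P ω, ⟨fun w => ?_, ?_, fun x => ?_⟩,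
    fun w hw => ?_⟩
  · exact div_nonneg (sum_nonneg fun ω _ => hP ω) hE.le
  · rw [← sum_div, sum_fiberwise, div_self hE.ne']
  · rw [← sum_div, sum_fiberwise_eq_sum_filter, div_le_iff₀ hE]
    simpa using hp x
  · obtain ⟨ω, hω, -⟩ := exists_ne_zero_of_sum_ne_zero (div_ne_zero_iff.1 hw).1
    obtain ⟨hωE, rfl⟩ := mem_filter.1 hω
    exact hv ω hωE

end SmoothDistributions

section DisjointMembers

variable {α : Type*}

/-- The family `F` has `k` pairwise disjoint members. For `F = W f z` this says that
`MBS(f, z) ≥ k`. -/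
def HasDisjointMembers (F : Set (Finset α)) (k : ℕ) : Prop :=
  ∃ w : Fin k → Finset α, (∀ i, w i ∈ F) ∧ ∀ i j, i ≠ j → Disjoint (w i) (w j)

lemma hasDisjointMembers_card {ι : Type*} {F : Set (Finset α)} {s : Finset ι} {w : ι → Finset α}
    (hw : ∀ i ∈ s, w i ∈ F) (hdisj : (s : Set ι).PairwiseDisjoint w) :
    HasDisjointMembers F #s :=
  ⟨fun j => w (s.equivFin.symm j), fun j => hw _ (s.equivFin.symm j).2, fun i j hij =>
    hdisj (s.equivFin.symm i).2 (s.equivFin.symm j).2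
      fun h => hij (s.equivFin.symm.injective (Subtype.ext h))⟩

end DisjointMembers

section MultiplyCovered

variable {α ι : Type*} [Fintype α] [DecidableEq α] [Fintype ι]

/-- The set of points that lie in at least two members of the family `ω`. -/
def multiplyCovered (ω : ι → Finset α) : Finset α := {x | 1 < #{j | x ∈ ω j}}

lemma mem_multiplyCovered {ω : ι → Finset α} {x : α} :
    x ∈ multiplyCovered ω ↔ ∃ a b, a ≠ b ∧ x ∈ ω a ∧ x ∈ ω b := by
  simp only [multiplyCovered, mem_filter, mem_univ, true_and, one_lt_card]
  tauto

variable [DecidableEq ι]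

lemma union_multiplyCovered_eq (ω : ι → Finset α) (i : ι) :
    ω i ∪ multiplyCovered ω = ω i ∪ multiplyCovered fun j : {j // j ≠ i} => ω j := by
  ext x
  simp only [mem_union, mem_multiplyCovered, Subtype.exists, ne_eq, Subtype.mk.injEq]
  grind

lemma IsSmoothDist.sum_prod_mem_multiplyCovered_le {D : Finset α → ℝ} {p : ℝ}
    (hD : IsSmoothDist D p) (x : α) :
    ∑ ω : ι → Finset α with x ∈ multiplyCovered ω, ∏ j, D (ω j) ≤ (Fintype.card ι * p) ^ 2 := by
  have P_nonneg : ∀ ω : ι → Finset α, 0 ≤ ∏ j, D (ω j) := fun ω =>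
    prod_nonneg fun j _ => hD.nonneg (ω j)
  have pair_le : ∀ ab ∈ (univ : Finset ι).offDiag,
      ∑ ω : ι → Finset α with x ∈ ω ab.1 ∧ x ∈ ω ab.2, ∏ j, D (ω j) ≤ p ^ 2 := by
    rintro ⟨a, b⟩ hab
    have hab : a ≠ b := by simpa using hab
    have := sum_prod_filter_forall_mem hD.sum_eq_one {a, b} {w | x ∈ w}
    simp only [mem_insert, mem_singleton, forall_eq_or_imp, forall_eq, mem_filter, mem_univ,
      true_and, card_pair hab] at this
    rw [this]
    exact pow_le_pow_left₀ (sum_nonneg fun w _ => hD.nonneg w) (hD.marginal_le x) 2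
  calc ∑ ω : ι → Finset α with x ∈ multiplyCovered ω, ∏ j, D (ω j)
      ≤ ∑ ω : ι → Finset α, ∑ ab ∈ (univ : Finset ι).offDiag with x ∈ ω ab.1 ∧ x ∈ ω ab.2,
          ∏ j, D (ω j) := by
        rw [sum_filter]
        refine sum_le_sum fun ω _ => ?_
        split_ifs with hx
        · obtain ⟨a, b, hab, ha, hb⟩ := mem_multiplyCovered.1 hx
          exact single_le_sum (f := fun _ : ι × ι => ∏ j, D (ω j)) (a := (a, b))
            (fun _ _ => P_nonneg ω) (by simp [hab, ha, hb])
        · exact sum_nonneg fun _ _ => P_nonneg ω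
    _ = ∑ ab ∈ (univ : Finset ι).offDiag,
          ∑ ω : ι → Finset α with x ∈ ω ab.1 ∧ x ∈ ω ab.2, ∏ j, D (ω j) := by
        simp only [sum_filter]
        exact sum_comm
    _ ≤ #(univ : Finset ι).offDiag * p ^ 2 := by
        simpa only [nsmul_eq_mul] using sum_le_card_nsmul _ _ _ pair_le
    _ ≤ (Fintype.card ι * p) ^ 2 := by
        rw [mul_pow]
        gcongr
        rw [offDiag_card, card_univ, sq]
        exact_mod_cast Nat.sub_le _ _

end MultiplyCovered

section SensitiveSets

variable {α β : Type*} [Fintype α] [DecidableEq α]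

/-- The family `W(f, z)` for a function on the subsets of an arbitrary finite set `α`, with values
in an arbitrary type. -/
def sensitiveSets (f : Finset α → β) (z : Finset α) : Set (Finset α) :=
  {w | w ⊆ zᶜ ∧ f (z ∪ w) ≠ f z}

variable {f : Finset α → β} {z : Finset α} {p : ℝ}

lemma empty_notMem_sensitiveSets : ∅ ∉ sensitiveSets f z := by
  simp [sensitiveSets]

lemma sdiff_mem_sensitiveSets_iff {u : Finset α} :
    u \ z ∈ sensitiveSets f z ↔ f (z ∪ u) ≠ f z := by
  simp [sensitiveSets, subset_compl_iff_disjoint_right, sdiff_disjoint]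

lemma exists_hasSmoothDist_forall_not_half (hp : 0 < p)
    (h : HasSmoothDist (sensitiveSets f z) p) :
    ∃ z₀ p₀, 0 < p₀ ∧ p₀ ≤ p ∧ HasSmoothDist (sensitiveSets f z₀) p₀ ∧
      ∀ z', ¬ HasSmoothDist (sensitiveSets f z') (p₀ / 2) := by
  by_contra! halve
  have smooth_div_two_pow : ∀ m : ℕ, ∃ z', HasSmoothDist (sensitiveSets f z') (p / 2 ^ m) := by
    intro m
    induction m with
    | zero => exact ⟨z, by simpa using h⟩
    | succ m ih =>
      obtain ⟨z', hz'⟩ := ih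
      rw [pow_succ, ← div_div]
      exact halve z' _ (by positivity) (div_le_self hp.le (one_le_pow₀ one_le_two)) hz'
  obtain ⟨m, hm⟩ := pow_unbounded_of_one_lt (Fintype.card α * p) (one_lt_two (α := ℝ))
  obtain ⟨z', hz'⟩ := smooth_div_two_pow m
  have := hz'.one_le_card_mul empty_notMem_sensitiveSets
  rw [← mul_div_assoc, one_le_div (by positivity)] at this
  exact this.not_gt hm

lemma mul_sum_filter_ne_le [DecidableEq β] {Ω : Type*} [Fintype Ω] {P : Ω → ℝ}
    (hP : ∀ ω, 0 ≤ P ω) {u : Ω → Finset α} {q r : ℝ} (hr : 0 ≤ r)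
    (hu : ∀ x, ∑ ω with x ∈ u ω, P ω ≤ r) (hq : ¬ HasSmoothDist (sensitiveSets f z) q) :
    q * ∑ ω with f (z ∪ u ω) ≠ f z, P ω ≤ r := by
  by_contra! hlt
  set δ := ∑ ω with f (z ∪ u ω) ≠ f z, P ω
  have δ_nonneg : 0 ≤ δ := sum_nonneg fun ω _ => hP ω
  have δ_pos : 0 < δ := δ_nonneg.lt_of_ne' fun h => by
    rw [h, mul_zero] at hlt
    exact hr.not_gt hlt
  refine hq (hasSmoothDist_of_conditional_law hP δ_pos (v := fun ω => u ω \ z)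
    (fun ω hω => sdiff_mem_sensitiveSets_iff.2 (mem_filter.1 hω).2) fun x => ?_)
  refine le_trans (sum_le_sum_of_subset_of_nonneg ?_ fun ω _ _ => hP ω) ((hu x).trans hlt.le)
  intro ω
  simp +contextual

section IndependentSamples

variable {ι : Type*} [Fintype ι] [DecidableEq ι] [DecidableEq β] {D : Finset α → ℝ} {q : ℝ}

lemma IsSmoothDist.mul_sum_prod_ne_le (hD : IsSmoothDist D p)
    (hq : ¬ HasSmoothDist (sensitiveSets f z) q) :
    q * ∑ ω : ι → Finset α with f (z ∪ multiplyCovered ω) ≠ f z, ∏ j, D (ω j) ≤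
      (Fintype.card ι * p) ^ 2 :=
  mul_sum_filter_ne_le (fun ω => prod_nonneg fun j _ => hD.nonneg (ω j)) (sq_nonneg _)
    hD.sum_prod_mem_multiplyCovered_le hq

lemma IsSmoothDist.mul_sum_prod_union_ne_le (hD : IsSmoothDist D p)
    (hq : ∀ z', ¬ HasSmoothDist (sensitiveSets f z') q) (i : ι) :
    q * ∑ ω : ι → Finset α with f (z ∪ ω i ∪ multiplyCovered ω) ≠ f (z ∪ ω i), ∏ j, D (ω j) ≤
      (Fintype.card ι * p) ^ 2 := by
  have fixed_le : ∀ w, q * ∑ ω : {j // j ≠ i} → Finset α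
      with f (z ∪ w ∪ multiplyCovered ω) ≠ f (z ∪ w), ∏ j, D (ω j) ≤
      (Fintype.card ι * p) ^ 2 := fun w => by
    refine (hD.mul_sum_prod_ne_le (hq (z ∪ w))).trans ?_
    rw [mul_pow, mul_pow]
    gcongr
    exact Fintype.card_subtype_le _
  calc q * ∑ ω : ι → Finset α with f (z ∪ ω i ∪ multiplyCovered ω) ≠ f (z ∪ ω i), ∏ j, D (ω j)
      = ∑ w, D w * (q * ∑ ω : {j // j ≠ i} → Finset α
          with f (z ∪ w ∪ multiplyCovered ω) ≠ f (z ∪ w), ∏ j, D (ω j)) := by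
        simp only [union_assoc, union_multiplyCovered_eq _ i]
        rw [sum_prod_filter_split D i
          fun w ω => f (z ∪ (w ∪ multiplyCovered ω)) ≠ f (z ∪ w), mul_sum]
        exact sum_congr rfl fun w _ => mul_left_comm _ _ _
    _ ≤ ∑ w, D w * (Fintype.card ι * p) ^ 2 :=
        sum_le_sum fun w _ => mul_le_mul_of_nonneg_left (fixed_le w) (hD.nonneg w)
    _ = (Fintype.card ι * p) ^ 2 := by rw [← sum_mul, hD.sum_eq_one, one_mul]

end IndependentSamples

lemma hasDisjointMembers_of_sensitive_family {ι : Type*} [Fintype ι] {ω : ι → Finset α}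
    (hω : ∀ i, ω i ∈ sensitiveSets f z) (hz : f (z ∪ multiplyCovered ω) = f z) {s : Finset ι}
    (hs : ∀ i ∈ s, f (z ∪ ω i ∪ multiplyCovered ω) = f (z ∪ ω i)) :
    HasDisjointMembers (sensitiveSets f (z ∪ multiplyCovered ω)) #s := by
  refine hasDisjointMembers_card (w := fun i => ω i \ (z ∪ multiplyCovered ω))
    (fun i hi => ?_) fun a _ b _ hab => ?_
  · rw [sdiff_mem_sensitiveSets_iff, union_right_comm, hs i hi, hz]
    exact (hω i).2
  · refine disjoint_left.2 fun x hxa hxb => ?_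
    rw [mem_sdiff] at hxa hxb
    exact hxa.2 (mem_union_right z (mem_multiplyCovered.2 ⟨a, b, hab, hxa.1, hxb.1⟩))

lemma HasSmoothDist.exists_hasDisjointMembers (hp : 0 < p)
    (h : HasSmoothDist (sensitiveSets f z) p)
    (hmin : ∀ z', ¬ HasSmoothDist (sensitiveSets f z') (p / 2)) {k : ℕ} (hk : 6 * k ^ 2 * p ≤ 1) :
    ∃ z' m, HasDisjointMembers (sensitiveSets f z') m ∧ k ≤ 2 * m := by
  classical
  obtain ⟨D, hD, hDW⟩ := h
  have le_third : ∀ {δ : ℝ}, p / 2 * δ ≤ (Fintype.card (Fin k) * p) ^ 2 → δ ≤ 1 / 3 := by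
    intro δ hδ
    rw [Fintype.card_fin] at hδ
    refine le_of_mul_le_mul_left (hδ.trans ?_) (half_pos hp)
    calc ((k : ℝ) * p) ^ 2 = 6 * k ^ 2 * p * (p / 6) := by ring
      _ ≤ 1 * (p / 6) := by gcongr
      _ = p / 2 * (1 / 3) := by ring
  obtain ⟨ω, hPω, hA, hB⟩ := exists_notMem_card_le_two_mul_card_notMem
    (fun ω => prod_nonneg fun j _ => hD.nonneg (ω j)) (sum_prod_eq_one hD.sum_eq_one)
    (le_third (hD.mul_sum_prod_ne_le (hmin z)))
    fun i : Fin k => le_third (hD.mul_sum_prod_union_ne_le (z := z) hmin i)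
  simp only [mem_filter, mem_univ, true_and, not_not] at hA hB
  rw [Fintype.card_fin] at hB
  have ω_mem : ∀ i, ω i ∈ sensitiveSets f z := fun i =>
    hDW _ (prod_ne_zero_iff.1 hPω i (mem_univ i))
  exact ⟨_, _, hasDisjointMembers_of_sensitive_family ω_mem hA fun i hi => (mem_filter.1 hi).2, hB⟩

end SensitiveSets

theorem stmt6_general {α β : Type*} [Fintype α] [DecidableEq α] (f : Finset α → β)
    (z : Finset α) {p : ℝ} (hp : 0 < p) (h : HasSmoothDist (sensitiveSets f z) p) :
    ∃ z' k, HasDisjointMembers (sensitiveSets f z') k ∧ 1 / 12 / √p ≤ k := by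
  obtain ⟨z₀, p₀, hp₀, hp₀_le, h₀, hmin⟩ := exists_hasSmoothDist_forall_not_half hp h
  set t : ℝ := 1 / (3 * √p₀) with ht
  have bound_le : 1 / 12 / √p ≤ t / 4 :=
    calc 1 / 12 / √p ≤ 1 / 12 / √p₀ := by gcongr
      _ = t / 4 := by rw [ht]; field_simp; norm_num
  have t_sq : 9 * t ^ 2 * p₀ = 1 := by
    rw [ht, div_pow, mul_pow, Real.sq_sqrt hp₀.le]
    field_simp
    norm_num
  have floor_le : (⌊t⌋₊ : ℝ) ≤ t := Nat.floor_le (by positivity)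
  have lt_floor : t < ⌊t⌋₊ + 1 := Nat.lt_floor_add_one t
  rcases Nat.eq_zero_or_pos ⌊t⌋₊ with floor_zero | floor_pos
  · obtain ⟨w, hw⟩ := h₀.nonempty
    refine ⟨z₀, 1, ⟨fun _ => w, fun _ => hw, fun i j hij => absurd (Subsingleton.elim i j) hij⟩, ?_⟩
    rw [floor_zero, Nat.cast_zero] at lt_floor
    rw [Nat.cast_one]
    linarith
  · have floor_sq : 6 * (⌊t⌋₊ : ℝ) ^ 2 * p₀ ≤ 1 :=
      calc 6 * (⌊t⌋₊ : ℝ) ^ 2 * p₀ ≤ 9 * t ^ 2 * p₀ := by gcongr; norm_num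
        _ = 1 := t_sq
    obtain ⟨z', m, hm, hle⟩ := h₀.exists_hasDisjointMembers hp₀ hmin floor_sq
    refine ⟨z', m, hm, ?_⟩
    have one_le_floor : (1 : ℝ) ≤ ⌊t⌋₊ := mod_cast floor_pos
    have floor_le_two_mul : (⌊t⌋₊ : ℝ) ≤ 2 * m := mod_cast hle
    linarith

end

/-- `FMBS(f) = O(MBS(f)²)`: if there is a `p`-smooth distribution supported on `W(f,z)`,
then `MBS(f) ≥ c/√p`, i.e. some `z'` admits at least `c/√p` pairwise disjoint
elements of `W(f,z')`. -/
theorem stmt6 :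
    ∃ c : ℝ, 0 < c ∧
      ∀ (n : ℕ) (f : Finset (Fin n) → ℝ) (z : Finset (Fin n)) (p : ℝ),
        0 < p → p ≤ 1 →
        (∃ D : Finset (Fin n) → ℝ,
          (∀ w, 0 ≤ D w) ∧
          (∑ w : Finset (Fin n), D w) = 1 ∧
          (∀ w, D w ≠ 0 → w ∈ W f z) ∧
          (∀ i : Fin n, (∑ w ∈ Finset.univ.filter (fun w : Finset (Fin n) => i ∈ w), D w) ≤ p)) →
        ∃ (z' : Finset (Fin n)) (k : ℕ) (w : Fin k → Finset (Fin n)),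
          (∀ i, w i ∈ W f z') ∧
          (∀ i j, i ≠ j → Disjoint (w i) (w j)) ∧
          c / Real.sqrt p ≤ (k : ℝ) := by
  refine ⟨1 / 12, by norm_num, fun n f z p hp _ ⟨D, h_nonneg, h_sum, h_supp, h_marginal⟩ => ?_⟩
  obtain ⟨z', k, ⟨w, hw, hdisj⟩, hk⟩ :=
    stmt6_general f z hp ⟨D, ⟨h_nonneg, h_sum, h_marginal⟩, h_supp⟩
  exact ⟨z', k, w, hw, hdisj, hk⟩
end

section
/- There is an absolute constant C > 0 such that the following holds. Let f : {0,1}^n → ℝ have sparsity spar(f) = r ≥ 2, and let K ≥ 1 be such that for every z ∈ {0,1}^n there exists a probability distribution D_z on [n] with Σ_{i ∈ w} D_z(i) ≥ 1/K for every w ∈ W(f,z) (i.e., the fractional hitting set complexity FHSC(f), which by LP duality equals FMBS(f), is at most K). Then for every z ∈ {0,1}^n the family W(f,z) has a hitting set of size at most C·K·log₂ r; that is, HSC(f) ≤ O(FMBS(f)·log spar(f)). -/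
/-!
Every inclusion-minimal `w ∈ W f z` has the form `s \ z` for a monomial `s` of `f`: the coefficient
of `w` in the restriction `t ↦ f (z ∪ t)` equals `f (z ∪ w) - f z ≠ 0` by minimality, and it is also
the sum of the coefficients of `f` at the sets `w ∪ u` with `u ⊆ z`. So `W f z` has at most
`sparsity f` minimal members, and hitting those suffices. A finite family all of whose members have
weight at least `p` is hit greedily: by averaging, some point lies in a `p`-fraction of the members
not yet hit, so `log |F| / p + 1` points are enough.
-/

theorem exists_sum_mul_le_of_mem_stdSimplex {ι : Type*} [Fintype ι] {D : ι → ℝ}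
    (hD : D ∈ stdSimplex ℝ ι) (g : ι → ℝ) : ∃ i, ∑ j, D j * g j ≤ g i := by
  have : Nonempty ι := by
    by_contra hι
    have := not_nonempty_iff.1 hι
    simpa using hD.2
  obtain ⟨i, hi⟩ := Finite.exists_max g
  refine ⟨i, ?_⟩
  calc ∑ j, D j * g j ≤ ∑ j, D j * g i :=
        Finset.sum_le_sum fun j _ ↦ mul_le_mul_of_nonneg_left (hi j) (hD.1 j)
    _ = g i := by rw [← Finset.sum_mul, hD.2, one_mul]

section HittingSet

variable {ι : Type*} [DecidableEq ι]

/-- `H` is a hitting set for the family `F`: it meets every member of `F`. The family is a `Set`, so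
that the notion applies directly to `W f z`. -/
def IsHittingSet (H : Finset ι) (F : Set (Finset ι)) : Prop :=
  ∀ w ∈ F, (H ∩ w).Nonempty

theorem IsHittingSet.of_minimal {H : Finset ι} {F : Set (Finset ι)}
    (hH : IsHittingSet H {w | Minimal (· ∈ F) w}) : IsHittingSet H F := by
  intro w hw
  obtain ⟨v, hvw, hv⟩ := exists_minimal_le_of_wellFoundedLT (· ∈ F) w hw
  exact (hH v hv).mono (Finset.inter_subset_inter_left hvw)

theorem IsHittingSet.insert_of_filter_notMem {H : Finset ι} {F : Finset (Finset ι)} {i : ι}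
    (hH : IsHittingSet H (F.filter (i ∉ ·) : Finset (Finset ι))) :
    IsHittingSet (insert i H) F := by
  intro w hw
  by_cases hi : i ∈ w
  · exact ⟨i, Finset.mem_inter.2 ⟨Finset.mem_insert_self i H, hi⟩⟩
  · exact (hH w (Finset.mem_filter.2 ⟨hw, hi⟩)).mono
      (Finset.inter_subset_inter_right (Finset.subset_insert i H))

variable [Fintype ι] {D : ι → ℝ} {p : ℝ}

theorem sum_sum_mem_eq_sum_mul_card_filter (D : ι → ℝ) (F : Finset (Finset ι)) :
    ∑ w ∈ F, ∑ i ∈ w, D i = ∑ i, D i * (F.filter (i ∈ ·)).card := by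
  calc ∑ w ∈ F, ∑ i ∈ w, D i = ∑ i, ∑ w ∈ F with i ∈ w, D i :=
        Finset.sum_comm' (by simp)
    _ = ∑ i, D i * (F.filter (i ∈ ·)).card := by simp [mul_comm]

theorem exists_card_filter_notMem_le (hD : D ∈ stdSimplex ℝ ι) {F : Finset (Finset ι)}
    (hF : ∀ w ∈ F, p ≤ ∑ i ∈ w, D i) :
    ∃ i, ((F.filter (i ∉ ·)).card : ℝ) ≤ (1 - p) * F.card := by
  obtain ⟨i, hi⟩ := exists_sum_mul_le_of_mem_stdSimplex hD fun i ↦ ((F.filter (i ∈ ·)).card : ℝ)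
  have hmem : F.card * p ≤ ((F.filter (i ∈ ·)).card : ℝ) := by
    calc F.card * p ≤ ∑ w ∈ F, ∑ i ∈ w, D i := by
          simpa using Finset.card_nsmul_le_sum F _ p hF
      _ ≤ (F.filter (i ∈ ·)).card := (sum_sum_mem_eq_sum_mul_card_filter D F).trans_le hi
  have hsplit : ((F.filter (i ∈ ·)).card : ℝ) + (F.filter (i ∉ ·)).card = F.card := by
    exact_mod_cast Finset.card_filter_add_card_filter_not (s := F) (i ∈ ·)
  exact ⟨i, by linarith⟩

theorem log_div_add_one_le_of_le_one_sub_mul {a b : ℝ} (hp : 0 < p) (ha : 0 < a) (hb : 0 < b)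
    (hab : a ≤ (1 - p) * b) : Real.log a / p + 1 ≤ Real.log b / p := by
  have hp' : 0 < 1 - p := pos_of_mul_pos_left (ha.trans_le hab) hb.le
  have hlog : Real.log a ≤ Real.log b - p := by
    calc Real.log a ≤ Real.log ((1 - p) * b) := Real.log_le_log ha hab
      _ = Real.log (1 - p) + Real.log b := Real.log_mul hp'.ne' hb.ne'
      _ ≤ Real.log b - p := by linarith [Real.log_le_sub_one_of_pos hp']
  rw [div_add_one hp.ne']
  gcongr
  linarith

theorem exists_isHittingSet_card_le (hD : D ∈ stdSimplex ℝ ι) (hp : 0 < p)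
    (F : Finset (Finset ι)) (hF : ∀ w ∈ F, p ≤ ∑ i ∈ w, D i) :
    ∃ H : Finset ι, IsHittingSet H F ∧ (H.card : ℝ) ≤ Real.log F.card / p + 1 := by
  induction F using Finset.strongInduction with
  | H F ih =>
  rcases F.eq_empty_or_nonempty with rfl | hne
  · exact ⟨∅, by simp [IsHittingSet], by simp⟩
  obtain ⟨i, hi⟩ := exists_card_filter_notMem_le hD hF
  set F' := F.filter (i ∉ ·) with hF'
  have hcard : (0 : ℝ) < F.card := by exact_mod_cast hne.card_pos
  rcases F'.eq_empty_or_nonempty with hempty | hne'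
  · refine ⟨insert i ∅, .insert_of_filter_notMem ?_, ?_⟩
    · simp [← hF', hempty, IsHittingSet]
    · simpa using div_nonneg (Real.log_natCast_nonneg F.card) hp.le
  · have hlt : (F'.card : ℝ) < F.card := hi.trans_lt (mul_lt_of_lt_one_left hcard (by linarith))
    have hss : F' ⊂ F := (Finset.filter_subset _ F).ssubset_of_ne fun h ↦
      hlt.ne (congrArg (fun s ↦ (s.card : ℝ)) h)
    obtain ⟨H, hH, hHcard⟩ := ih F' hss fun w hw ↦ hF w (Finset.mem_of_mem_filter w hw)
    refine ⟨insert i H, hH.insert_of_filter_notMem, ?_⟩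
    have hcard' : (0 : ℝ) < F'.card := by exact_mod_cast hne'.card_pos
    calc ((insert i H).card : ℝ) ≤ H.card + 1 := by exact_mod_cast Finset.card_insert_le i H
      _ ≤ Real.log F'.card / p + 1 + 1 := by gcongr
      _ ≤ Real.log F.card / p + 1 := by
          gcongr
          exact log_div_add_one_le_of_le_one_sub_mul hp hcard' hcard hi

end HittingSet

section Coefficients

variable {n : ℕ}

theorem coeff_comp_insert (f : Finset (Fin n) → ℝ) {a : Fin n} {s : Finset (Fin n)}
    (ha : a ∉ s) : coeff (fun t ↦ f (insert a t)) s = coeff f s + coeff f (insert a s) := by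
  have hsplit : coeff f (insert a s) = -coeff f s + coeff (fun t ↦ f (insert a t)) s := by
    unfold coeff
    rw [Finset.sum_powerset_insert ha, ← Finset.sum_neg_distrib]
    congr 1 <;> refine Finset.sum_congr rfl fun t ht ↦ ?_
    · rw [Finset.card_insert_of_notMem ha,
        Nat.sub_add_comm (Finset.card_le_card (Finset.mem_powerset.1 ht)), pow_succ]
      ring
    · rw [Finset.card_insert_of_notMem ha,
        Finset.card_insert_of_notMem fun h ↦ ha (Finset.mem_powerset.1 ht h),
        Nat.add_sub_add_right]
  linarith

theorem coeff_const {s : Finset (Fin n)} (hs : s.Nonempty) (c : ℝ) :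
    coeff (fun _ ↦ c) s = 0 := by
  obtain ⟨a, ha⟩ := hs
  have := coeff_comp_insert (fun _ ↦ c) (Finset.notMem_erase a s)
  rw [Finset.insert_erase ha] at this
  linarith

theorem coeff_union_left (f : Finset (Fin n) → ℝ) {z w : Finset (Fin n)} (hwz : Disjoint w z) :
    coeff (fun t ↦ f (z ∪ t)) w = ∑ u ∈ z.powerset, coeff f (w ∪ u) := by
  induction z using Finset.induction_on generalizing f with
  | empty => simp
  | insert a z haz ih =>
    obtain ⟨haw, hwz⟩ := Finset.disjoint_insert_right.1 hwz
    calc coeff (fun t ↦ f (insert a z ∪ t)) w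
        = ∑ u ∈ z.powerset, coeff (fun t ↦ f (insert a t)) (w ∪ u) := by
          simpa only [Finset.insert_union] using ih (fun t ↦ f (insert a t)) hwz
      _ = ∑ u ∈ z.powerset, (coeff f (w ∪ u) + coeff f (w ∪ insert a u)) := by
          refine Finset.sum_congr rfl fun u hu ↦ ?_
          have hau : a ∉ w ∪ u := by
            simpa [haw] using fun h ↦ haz (Finset.mem_powerset.1 hu h)
          rw [coeff_comp_insert f hau, Finset.union_insert]
      _ = ∑ u ∈ (insert a z).powerset, coeff f (w ∪ u) := by
          rw [Finset.sum_powerset_insert haz, Finset.sum_add_distrib]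

theorem coeff_eq_sub_of_forall_ssubset {g : Finset (Fin n) → ℝ} {w : Finset (Fin n)} {c : ℝ}
    (hw : w.Nonempty) (hg : ∀ t ⊂ w, g t = c) : coeff g w = g w - c := by
  calc coeff g w = coeff g w - coeff (fun _ ↦ c) w := by rw [coeff_const hw, sub_zero]
    _ = ∑ t ∈ w.powerset, (-1 : ℝ) ^ (w.card - t.card) * (g t - c) := by
        simp only [coeff, mul_sub, Finset.sum_sub_distrib]
    _ = (-1 : ℝ) ^ (w.card - w.card) * (g w - c) := by
        refine Finset.sum_eq_single_of_mem w (Finset.mem_powerset_self w) fun t ht htw ↦ ?_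
        rw [hg t ((Finset.mem_powerset.1 ht).ssubset_of_ne htw), sub_self, mul_zero]
    _ = g w - c := by simp

end Coefficients

section MinimalMembers

variable {n : ℕ} {f : Finset (Fin n) → ℝ} {z w : Finset (Fin n)}

theorem nonempty_of_mem_W (hw : w ∈ W f z) : w.Nonempty := by
  rw [Finset.nonempty_iff_ne_empty]
  rintro rfl
  exact hw.2 (by rw [Finset.union_empty])

theorem coeff_union_left_ne_zero_of_minimal (hw : Minimal (· ∈ W f z) w) :
    coeff (fun t ↦ f (z ∪ t)) w ≠ 0 := by
  have hproper : ∀ t ⊂ w, f (z ∪ t) = f z := fun t ht ↦ by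
    by_contra hne
    exact hw.not_prop_of_lt ht ⟨ht.subset.trans hw.prop.1, hne⟩
  rw [coeff_eq_sub_of_forall_ssubset (nonempty_of_mem_W hw.prop) hproper]
  exact sub_ne_zero.2 hw.prop.2

theorem exists_coeff_ne_zero_sdiff_eq_of_minimal (hw : Minimal (· ∈ W f z) w) :
    ∃ s, coeff f s ≠ 0 ∧ s \ z = w := by
  have hwz : Disjoint w z := Finset.subset_compl_iff_disjoint_right.1 hw.prop.1
  have hsum := coeff_union_left_ne_zero_of_minimal hw
  rw [coeff_union_left f hwz] at hsum
  obtain ⟨u, hu, hcoeff⟩ := Finset.exists_ne_zero_of_sum_ne_zero hsum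
  refine ⟨w ∪ u, hcoeff, ?_⟩
  rw [Finset.union_sdiff_distrib, hwz.sdiff_eq_left,
    Finset.sdiff_eq_empty_iff_subset.2 (Finset.mem_powerset.1 hu), Finset.union_empty]

theorem ncard_minimal_W_le_sparsity (f : Finset (Fin n) → ℝ) (z : Finset (Fin n)) :
    {w | Minimal (· ∈ W f z) w}.ncard ≤ sparsity f :=
  calc {w | Minimal (· ∈ W f z) w}.ncard
      ≤ ((· \ z) '' {s | coeff f s ≠ 0}).ncard :=
        Set.ncard_le_ncard fun _ hw ↦ exists_coeff_ne_zero_sdiff_eq_of_minimal hw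
    _ ≤ sparsity f := Set.ncard_image_le

end MinimalMembers

theorem monotone_log_natCast : Monotone fun n : ℕ ↦ Real.log n := by
  intro m n hmn
  rcases m.eq_zero_or_pos with rfl | hm
  · simpa using Real.log_natCast_nonneg n
  · exact Real.log_le_log (by exact_mod_cast hm) (by exact_mod_cast hmn)

theorem mul_log_add_one_le_two_mul_mul_logb {K r : ℝ} (hK : 1 ≤ K) (hr : 2 ≤ r) :
    K * Real.log r + 1 ≤ 2 * K * Real.logb 2 r := by
  have hlog_two : 0 < Real.log 2 := Real.log_pos one_lt_two
  have hlog : Real.log r ≤ Real.logb 2 r :=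
    le_div_self (Real.log_nonneg (by linarith)) hlog_two (by linarith [Real.log_two_lt_d9])
  have hone : 1 ≤ Real.logb 2 r := by
    rw [Real.le_logb_iff_rpow_le one_lt_two (by linarith), Real.rpow_one]
    exact hr
  calc K * Real.log r + 1 ≤ K * Real.logb 2 r + K * Real.logb 2 r := by
        gcongr
        exact one_le_mul_of_one_le_of_one_le hK hone
    _ = 2 * K * Real.logb 2 r := by ring

theorem stmt7_general {n : ℕ} {f : Finset (Fin n) → ℝ} {K : ℝ} {z : Finset (Fin n)}
    {D : Fin n → ℝ} (hr : 2 ≤ sparsity f) (hK : 1 ≤ K) (hD : D ∈ stdSimplex ℝ (Fin n))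
    (hDW : ∀ w ∈ W f z, 1 / K ≤ ∑ i ∈ w, D i) :
    ∃ H : Finset (Fin n), IsHittingSet H (W f z) ∧
      (H.card : ℝ) ≤ 2 * K * Real.logb 2 (sparsity f) := by
  obtain ⟨F, hF⟩ := (Set.toFinite {w | Minimal (· ∈ W f z) w}).exists_finset_coe
  have hFr : F.card ≤ sparsity f := by
    simpa only [← hF, Set.ncard_coe_finset] using ncard_minimal_W_le_sparsity f z
  have hweight : ∀ w ∈ F, 1 / K ≤ ∑ i ∈ w, D i := fun w hw ↦
    hDW w (hF.subset (Finset.mem_coe.2 hw)).prop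
  obtain ⟨H, hH, hcard⟩ := exists_isHittingSet_card_le hD (by positivity) F hweight
  refine ⟨H, .of_minimal (hF ▸ hH), ?_⟩
  calc (H.card : ℝ) ≤ Real.log F.card / (1 / K) + 1 := hcard
    _ = K * Real.log F.card + 1 := by rw [div_div_eq_mul_div, div_one, mul_comm]
    _ ≤ K * Real.log (sparsity f) + 1 := by
        have hlog : Real.log F.card ≤ Real.log (sparsity f) := monotone_log_natCast hFr
        gcongr
    _ ≤ 2 * K * Real.logb 2 (sparsity f) :=
        mul_log_add_one_le_two_mul_mul_logb hK (by exact_mod_cast hr)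

/-- `HSC(f) = O(FMBS(f)·log spar(f))`: if for every `z` there is a probability
distribution on `[n]` putting weight at least `1/K` on every `w ∈ W(f,z)`
(i.e. `FHSC(f) = FMBS(f) ≤ K`), then every `W(f,z)` has a hitting set of size
`≤ C·K·log₂ r`. -/
theorem stmt7 :
    ∃ C : ℝ, 0 < C ∧
      ∀ (n : ℕ) (f : Finset (Fin n) → ℝ) (K : ℝ),
        2 ≤ sparsity f →
        1 ≤ K →
        (∀ z : Finset (Fin n), ∃ D : Fin n → ℝ,
          (∀ i, 0 ≤ D i) ∧ (∑ i, D i) = 1 ∧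
          (∀ w ∈ W f z, 1 / K ≤ ∑ i ∈ w, D i)) →
        ∀ z : Finset (Fin n),
          ∃ H : Finset (Fin n),
            (∀ w ∈ W f z, (H ∩ w).Nonempty) ∧
            (H.card : ℝ) ≤ C * K * Real.logb 2 (sparsity f) :=
  ⟨2, two_pos, fun _ _ _ hr hK hD z ↦
    let ⟨_, hD0, hD1, hDW⟩ := hD z
    stmt7_general hr hK ⟨hD0, hD1⟩ hDW⟩
end

section
/- Let f : {0,1}^n → ℝ and z ∈ {0,1}^n, and define the restriction f_z : {0,1}^{[n]∖z} → ℝ by f_z(w) = f(z ∨ w). Then for any w ⊆ [n]∖z, w is a minimal element (with respect to set inclusion) of W(f,z) = {w' ⊆ [n]∖z : f(z ∨ w') ≠ f(z)} if and only if w is a minimal element of mon(f_z), the set system of non-constant monomials of f_z. -/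
/-- The coefficient of the monomial `s ⊆ [n]∖z` in the multilinear polynomial computing
the restriction `f_z : {0,1}^{[n]∖z} → ℝ`, `f_z(w) = f(z ∪ w)`. -/
noncomputable def coeffRes {n : ℕ} (f : Finset (Fin n) → ℝ) (z s : Finset (Fin n)) : ℝ :=
  ∑ t ∈ s.powerset, (-1 : ℝ) ^ (s.card - t.card) * f (z ∪ t)

/-- The set system of non-constant monomials of the restriction `f_z`. -/
def monRes {n : ℕ} (f : Finset (Fin n) → ℝ) (z : Finset (Fin n)) : Set (Finset (Fin n)) :=
  {s | s ⊆ zᶜ ∧ coeffRes f z s ≠ 0 ∧ s ≠ ∅}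

/-!
If `g` takes the value `g ∅` on every proper subset of a nonempty set `s`, then, since the signs
`(-1) ^ (#s - #t)` sum to zero over `t ⊆ s`, the coefficient of `g` at `s` is `g s - g ∅`.
Applied to `g = f_z`, this shows that, as long as no proper subset of `s` lies in `W(f, z)`,
membership of `s` in `W(f, z)` and in `mon(f_z)` are equivalent; by well-founded induction two
families related in this way have the same minimal elements.
-/

open Finset

section Minimal

variable {α : Type*} [Preorder α] [WellFoundedLT α] {P Q : α → Prop}

theorem forall_lt_not_iff_of_iff_of_forall_lt_not
    (h : ∀ a, (∀ b < a, ¬P b) → (P a ↔ Q a)) (a : α) :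
    (∀ b < a, ¬P b) ↔ ∀ b < a, ¬Q b := by
  constructor
  · intro hP b hb hQ
    exact hP b hb ((h b fun c hc => hP c (hc.trans hb)).2 hQ)
  · intro hQ b
    induction b using WellFoundedLT.induction with
    | ind b ih =>
      intro hb hP
      exact hQ b hb ((h b fun c hc => ih c hc (hc.trans hb)).1 hP)

theorem minimal_iff_minimal_of_iff_of_forall_lt_not
    (h : ∀ a, (∀ b < a, ¬P b) → (P a ↔ Q a)) (a : α) : Minimal P a ↔ Minimal Q a := by
  rw [minimal_iff_forall_lt, minimal_iff_forall_lt,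
    ← forall_lt_not_iff_of_iff_of_forall_lt_not h a]
  exact and_congr_left (h a)

end Minimal

section MoebiusCoeff

variable {α G : Type*} [AddCommGroup G]

/-- The coefficient of the monomial `∏ i ∈ s, x i` in the multilinear polynomial computing `g`,
where finite sets are identified with their indicator vectors. Values lie in an arbitrary abelian
group, so the Möbius signs act by integer scalar multiplication. -/
def moebiusCoeff (g : Finset α → G) (s : Finset α) : G :=
  ∑ t ∈ s.powerset, (-1 : ℤ) ^ (#s - #t) • g t

theorem sum_powerset_neg_one_pow_card_sub_card {s : Finset α} (hs : s.Nonempty) :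
    ∑ t ∈ s.powerset, (-1 : ℤ) ^ (#s - #t) = 0 := by
  simpa [hs.card_ne_zero] using sum_pow_mul_eq_add_pow (1 : ℤ) (-1) s

theorem moebiusCoeff_sub_const (g : Finset α → G) (c : G) {s : Finset α} (hs : s.Nonempty) :
    moebiusCoeff (fun t => g t - c) s = moebiusCoeff g s := by
  simp only [moebiusCoeff, smul_sub, sum_sub_distrib, ← sum_smul,
    sum_powerset_neg_one_pow_card_sub_card hs, zero_smul, sub_zero]

theorem moebiusCoeff_eq_self_of_forall_ssubset {g : Finset α → G} {s : Finset α}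
    (h : ∀ t ⊂ s, g t = 0) : moebiusCoeff g s = g s := by
  rw [moebiusCoeff, sum_eq_single_of_mem s (mem_powerset_self s)]
  · simp
  · intro t hts hne
    rw [h t ((mem_powerset.1 hts).ssubset_of_ne hne), smul_zero]

theorem moebiusCoeff_eq_sub_of_forall_ssubset {g : Finset α → G} {c : G} {s : Finset α}
    (hs : s.Nonempty) (h : ∀ t ⊂ s, g t = c) : moebiusCoeff g s = g s - c := by
  rw [← moebiusCoeff_sub_const g c hs]
  exact moebiusCoeff_eq_self_of_forall_ssubset fun t ht => sub_eq_zero.2 (h t ht)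

theorem ne_apply_empty_iff_moebiusCoeff_ne_zero {g : Finset α → G} {s : Finset α}
    (h : ∀ t ⊂ s, g t = g ∅) : g s ≠ g ∅ ↔ moebiusCoeff g s ≠ 0 ∧ s ≠ ∅ := by
  obtain rfl | hs := s.eq_empty_or_nonempty
  · simp
  · simp [moebiusCoeff_eq_sub_of_forall_ssubset hs h, sub_eq_zero, hs.ne_empty]

theorem stmt8_general [DecidableEq α] (f : Finset α → G) (z w : Finset α) :
    Minimal (fun s => Disjoint z s ∧ f (z ∪ s) ≠ f z) w ↔
    Minimal (fun s => Disjoint z s ∧ moebiusCoeff (fun t => f (z ∪ t)) s ≠ 0 ∧ s ≠ ∅) w := by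
  refine minimal_iff_minimal_of_iff_of_forall_lt_not (fun s hmin => ?_) w
  refine and_congr_right fun hzs => ?_
  have const_below : ∀ t ⊂ s, f (z ∪ t) = f (z ∪ ∅) := fun t hts => by
    simpa [hzs.mono_right hts.subset] using hmin t hts
  simpa using ne_apply_empty_iff_moebiusCoeff_ne_zero const_below

end MoebiusCoeff

theorem coeffRes_eq_moebiusCoeff {n : ℕ} (f : Finset (Fin n) → ℝ) (z s : Finset (Fin n)) :
    coeffRes f z s = moebiusCoeff (fun t => f (z ∪ t)) s := by
  simp [coeffRes, moebiusCoeff]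

/-- A set `w ⊆ [n]∖z` is a minimal element of `W(f,z)` iff it is a minimal element
of `mon(f_z)`. -/
theorem stmt8 (n : ℕ) (f : Finset (Fin n) → ℝ) (z w : Finset (Fin n)) (hw : w ⊆ zᶜ) :
    (w ∈ W f z ∧ ∀ w' ⊂ w, w' ∉ W f z) ↔
    (w ∈ monRes f z ∧ ∀ w' ⊂ w, w' ∉ monRes f z) := by
  simpa only [minimal_iff_forall_lt, W, monRes, Set.mem_ofPred_eq, subset_compl_iff_disjoint_left,
    coeffRes_eq_moebiusCoeff] using stmt8_general f z w
end

section
/- Let f : {0,1}^n → ℝ, let z ∈ {0,1}^n, and let K ≥ 1 be such that every probability distribution supported on W(f,z) = {w ⊆ [n]∖z : f(z ∨ w) ≠ f(z)} has some coordinate i ∈ [n] with Pr[w_i = 1] ≥ 1/K (i.e., FMBS(f,z) ≤ K). Then for every q ∈ (0,1] and every q-smooth probability distribution D on {0,1}^{[n]∖z}: Pr_{w∼D}[f(z ∨ w) ≠ f(z)] ≤ q·K. -/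
/-!
Condition `D` on the event `f (z ∪ w) ≠ f z`, of probability `P > 0`. The result is a distribution
supported on `W f z`, so some coordinate has marginal at least `1 / K` under it. Conditioning
inflates marginals by a factor of at most `1 / P`, so this marginal is also at most `q / P`.
Comparing the two bounds gives `P ≤ q * K`.
-/

section Conditioning

variable {Ω 𝕜 : Type*} [Field 𝕜]

/-- The weight function `D` conditioned on the event `A`: its restriction to `A`, rescaled to total
mass `1`. It is the zero function when `A` has mass `0`. -/
noncomputable def condWeight (D : Ω → 𝕜) (A : Finset Ω) (w : Ω) : 𝕜 :=
  (A : Set Ω).indicator D w / ∑ v ∈ A, D v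

theorem support_condWeight_subset (D : Ω → 𝕜) (A : Finset Ω) :
    Function.support (condWeight D A) ⊆ A := by
  intro w hw
  exact Set.mem_of_indicator_ne_zero (div_ne_zero_iff.mp hw).1

variable [LinearOrder 𝕜] [IsStrictOrderedRing 𝕜] {D : Ω → 𝕜} {A : Finset Ω}

theorem condWeight_mem_stdSimplex [Fintype Ω] (hD : ∀ w, 0 ≤ D w) (hA : ∑ w ∈ A, D w ≠ 0) :
    condWeight D A ∈ stdSimplex 𝕜 Ω := by
  constructor
  · intro w
    exact div_nonneg (Set.indicator_nonneg (fun v _ => hD v) w) (Finset.sum_nonneg fun v _ => hD v)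
  · simp only [condWeight]
    rw [← Finset.sum_div, Finset.sum_indicator_subset D A.subset_univ, div_self hA]

theorem sum_condWeight_le (hD : ∀ w, 0 ≤ D w) (E : Finset Ω) :
    ∑ w ∈ E, condWeight D A w ≤ (∑ w ∈ E, D w) / ∑ w ∈ A, D w := by
  simp only [condWeight]
  rw [← Finset.sum_div]
  have hmass : 0 ≤ ∑ w ∈ A, D w := Finset.sum_nonneg fun w _ => hD w
  gcongr with w
  exact Set.indicator_le_self' (fun v _ => hD v) w

theorem stmt13_general [Fintype Ω] {ι : Type*} {E : ι → Finset Ω} {K q : 𝕜}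
    (hK : 0 < K) (hq : 0 ≤ q)
    (hA : ∀ D' ∈ stdSimplex 𝕜 Ω, Function.support D' ⊆ A → ∃ i, 1 / K ≤ ∑ w ∈ E i, D' w)
    (hD : ∀ w, 0 ≤ D w) (hE : ∀ i, ∑ w ∈ E i, D w ≤ q) :
    ∑ w ∈ A, D w ≤ q * K := by
  have hmass : 0 ≤ ∑ w ∈ A, D w := Finset.sum_nonneg fun w _ => hD w
  rcases hmass.eq_or_lt with hzero | hpos
  · rw [← hzero]
    positivity
  obtain ⟨i, hi⟩ := hA (condWeight D A) (condWeight_mem_stdSimplex hD hpos.ne')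
    (support_condWeight_subset D A)
  have hbounds : 1 / K ≤ q / ∑ w ∈ A, D w :=
    calc 1 / K ≤ ∑ w ∈ E i, condWeight D A w := hi
      _ ≤ (∑ w ∈ E i, D w) / ∑ w ∈ A, D w := sum_condWeight_le hD (E i)
      _ ≤ q / ∑ w ∈ A, D w := by gcongr; exact hE i
  simpa only [one_mul] using (div_le_div_iff₀ hK hpos).mp hbounds

end Conditioning

open scoped Classical in
theorem sum_filter_ne_eq_sum_filter_mem_W {M : Type*} [AddCommMonoid M] {n : ℕ}
    (f : Finset (Fin n) → ℝ) {z : Finset (Fin n)} {D : Finset (Fin n) → M}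
    (hD : ∀ w, D w ≠ 0 → w ⊆ zᶜ) :
    ∑ w with f (z ∪ w) ≠ f z, D w = ∑ w with w ∈ W f z, D w := by
  refine (Finset.sum_subset ?_ ?_).symm
  · exact Finset.monotone_filter_right _ fun w _ hw => hw.2
  · intro w hw hwW
    simp only [Finset.mem_filter_univ] at hw hwW
    by_contra hDw
    exact hwW ⟨hD w hDw, hw⟩

open scoped Classical in
/-- Smooth-noise stability: if `FMBS(f,z) ≤ K` (every distribution supported on `W(f,z)`
has some coordinate with marginal `≥ 1/K`), then for every `q`-smooth distribution `D`
on `{0,1}^{[n]∖z}` we have `Pr_{w∼D}[f(z ∨ w) ≠ f(z)] ≤ q·K`. -/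
theorem stmt13 (n : ℕ) (f : Finset (Fin n) → ℝ) (z : Finset (Fin n)) (K : ℝ)
    (hK : 1 ≤ K)
    (hfmbs : ∀ D : Finset (Fin n) → ℝ,
      (∀ w, 0 ≤ D w) → (∑ w : Finset (Fin n), D w) = 1 →
      (∀ w, D w ≠ 0 → w ∈ W f z) →
      ∃ i : Fin n, 1 / K ≤ ∑ w ∈ Finset.univ.filter (fun w : Finset (Fin n) => i ∈ w), D w) :
    ∀ q : ℝ, 0 < q → q ≤ 1 →
      ∀ D : Finset (Fin n) → ℝ,
        (∀ w, 0 ≤ D w) → (∑ w : Finset (Fin n), D w) = 1 →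
        (∀ w, D w ≠ 0 → w ⊆ zᶜ) →
        (∀ i : Fin n, (∑ w ∈ Finset.univ.filter (fun w : Finset (Fin n) => i ∈ w), D w) ≤ q) →
        (∑ w ∈ Finset.univ.filter (fun w : Finset (Fin n) => f (z ∪ w) ≠ f z), D w) ≤ q * K := by
  intro q hq _ D hD _ hsupp hsmooth
  rw [sum_filter_ne_eq_sum_filter_mem_W f hsupp]
  exact stmt13_general (zero_lt_one.trans_le hK) hq.le
    (fun D' hD' hW => hfmbs D' hD'.1 hD'.2 fun w hw => by simpa using hW hw) hD hsmooth
end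

section
/- Let f : {0,1}^n → {0,1} be a boolean function and suppose z, w_1, …, w_k ∈ {0,1}^n are pairwise disjoint with f(z ∨ w_i) ≠ f(z) for every i ∈ [k] (i.e., MBS(f) ≥ k is witnessed). Then there exist maps X, Y : {0,1}^k → {0,1}^n and a bit c ∈ {0,1} such that for all a, b ∈ {0,1}^k: if a ∧ b = 0^k then f(X(a) ∧ Y(b)) ⊕ c = 1, and if a ∧ b has Hamming weight exactly 1 then f(X(a) ∧ Y(b)) ⊕ c = 0. (That is, the AND-function f∧ contains unique disjointness UDISJ_k as a sub-matrix.) -/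
/-!
Take `X a = Y a = z ∨ ⋁ i ∈ a, w i`. Since distinct blocks meet only inside `z`, the mixed terms of
`X a ∧ Y b` are absorbed by `z`, leaving `z ∨ ⋁ i ∈ a ∧ b, w i`. This is `z` when `a` and `b` are
disjoint and `z ∨ w i` when they meet exactly in `i`, so `f` tells the two cases apart.
-/

section DistribLattice

variable {L ι : Type*} [DistribLattice L] [OrderBot L] [DecidableEq ι]

theorem sup_finsetSup_inf_sup_finsetSup {z : L} {w : ι → L}
    (hw : Pairwise fun i j => w i ⊓ w j ≤ z) (a b : Finset ι) :
    (z ⊔ a.sup w) ⊓ (z ⊔ b.sup w) = z ⊔ (a ∩ b).sup w := by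
  rw [← sup_inf_left]
  apply le_antisymm
  · have inf_blocks_le : ∀ i ∈ a, ∀ j ∈ b, w i ⊓ w j ≤ z ⊔ (a ∩ b).sup w := by
      intro i hi j hj
      obtain rfl | hij := eq_or_ne i j
      · have hle : w i ≤ (a ∩ b).sup w := Finset.le_sup (Finset.mem_inter.mpr ⟨hi, hj⟩)
        exact inf_le_left.trans (hle.trans le_sup_right)
      · exact (hw hij).trans le_sup_left
    rw [Finset.sup_inf_sup]
    refine sup_le le_sup_left (Finset.sup_le fun p hp => ?_)
    exact inf_blocks_le p.1 (Finset.mem_product.mp hp).1 p.2 (Finset.mem_product.mp hp).2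
  · exact sup_le_sup_left
      (le_inf (Finset.sup_mono Finset.inter_subset_left)
        (Finset.sup_mono Finset.inter_subset_right)) z

theorem stmt14_general (f : L → Bool) (z : L) (w : ι → L)
    (hw : Pairwise fun i j => w i ⊓ w j ≤ z) (hsens : ∀ i, f (z ⊔ w i) ≠ f z) :
    ∃ (X Y : Finset ι → L) (c : Bool),
      ∀ a b : Finset ι,
        (a ∩ b = ∅ → xor (f (X a ⊓ Y b)) c = true) ∧
        ((a ∩ b).card = 1 → xor (f (X a ⊓ Y b)) c = false) := by
  refine ⟨fun a => z ⊔ a.sup w, fun b => z ⊔ b.sup w, !f z, fun a b => ?_⟩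
  simp only [sup_finsetSup_inf_sup_finsetSup hw]
  constructor
  · intro hab
    rw [hab, Finset.sup_empty, sup_bot_eq, Bool.xor_not_self]
  · intro hab
    obtain ⟨i, hi⟩ := Finset.card_eq_one.mp hab
    rw [hi, Finset.sup_singleton, Bool.eq_not.mpr (hsens i), Bool.xor_self]

end DistribLattice

/-- If `MBS(f) ≥ k` is witnessed by pairwise disjoint `z, w_1, …, w_k` with
`f(z ∨ w_i) ≠ f(z)`, then the AND-function of `f` contains unique disjointness
`UDISJ_k` as a sub-matrix: there are maps `X, Y : {0,1}^k → {0,1}^n` and a bit `c`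
with `f(X(a) ∧ Y(b)) ⊕ c = 1` whenever `a ∧ b = 0^k` and `f(X(a) ∧ Y(b)) ⊕ c = 0`
whenever `|a ∧ b| = 1`. -/
theorem stmt14 (n k : ℕ) (f : Finset (Fin n) → Bool)
    (z : Finset (Fin n)) (w : Fin k → Finset (Fin n))
    (hzw : ∀ i, Disjoint z (w i))
    (hww : ∀ i j, i ≠ j → Disjoint (w i) (w j))
    (hsens : ∀ i, f (z ∪ w i) ≠ f z) :
    ∃ (X Y : Finset (Fin k) → Finset (Fin n)) (c : Bool),
      ∀ a b : Finset (Fin k),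
        (a ∩ b = ∅ → xor (f (X a ∩ Y b)) c = true) ∧
        ((a ∩ b).card = 1 → xor (f (X a ∩ Y b)) c = false) :=
  stmt14_general f z w (fun i j hij => (hww i j hij).le_bot.trans bot_le) hsens
end
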